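/- Under Assumption (Lip) (r, P Lipschitz continuous with respect to the L¹ norm on ℬ₁(𝒳), and W Lipschitz continuous), there exists a Graphon Mean Field Equilibrium, i.e. a measurable policy ensemble 𝛑 and measurable mean field ensemble 𝛍 such that 𝛍 = Ψ(𝛑) and for every α ∈ [0,1] the policy π^α maximizes π ↦ J^𝛍_α(π) over all Markov policies π ∈ Π. -/

import Mathlib

open MeasureTheory Filter
open scoped BigOperators

namespace GMFG

variable {𝒳 𝒰 : Type*}

/-- The probability simplex 𝒫(𝒳) on a finite set, as probability mass functions. -/
def simplex (𝒳 : Type*) [Fintype 𝒳] : Set (𝒳 → ℝ) :=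
  {p | (∀ x, 0 ≤ p x) ∧ ∑ x, p x = 1}

/-- The set ℬ₁(𝒳) of (sub-probability) measures with total mass at most 1,
as mass functions. -/
def subProb (𝒳 : Type*) [Fintype 𝒳] : Set (𝒳 → ℝ) :=
  {p | (∀ x, 0 ≤ p x) ∧ ∑ x, p x ≤ 1}

/-- L¹ distance between measures on a finite set. -/
noncomputable def l1dist [Fintype 𝒳] (ν ν' : 𝒳 → ℝ) : ℝ := ∑ x, |ν x - ν' x|

/-- Markovian feedback policies π ∈ Π = 𝒫(𝒰)^{𝒯×𝒳}. -/
def IsPolicy [Fintype 𝒰] (π : ℕ → 𝒳 → 𝒰 → ℝ) : Prop :=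
  ∀ t x, (∀ u, 0 ≤ π t x u) ∧ ∑ u, π t x u = 1

/-- P : 𝒳×𝒰×ℬ₁(𝒳) → 𝒫(𝒳) is a transition kernel. -/
def IsKernel [Fintype 𝒳] [Fintype 𝒰] (P : 𝒳 → 𝒰 → (𝒳 → ℝ) → 𝒳 → ℝ) : Prop :=
  ∀ x u ν, ν ∈ subProb 𝒳 → P x u ν ∈ simplex 𝒳

/-- Lipschitz continuity of the transition kernel w.r.t. the L¹ norm. -/
def KernelLipschitz [Fintype 𝒳] [Fintype 𝒰] (P : 𝒳 → 𝒰 → (𝒳 → ℝ) → 𝒳 → ℝ) (L : ℝ) : Prop :=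
  ∀ x u ν ν', ν ∈ subProb 𝒳 → ν' ∈ subProb 𝒳 → l1dist (P x u ν) (P x u ν') ≤ L * l1dist ν ν'

/-- Lipschitz continuity of the reward w.r.t. the L¹ norm. -/
def RewardLipschitz [Fintype 𝒳] [Fintype 𝒰] (r : 𝒳 → 𝒰 → (𝒳 → ℝ) → ℝ) (L : ℝ) : Prop :=
  ∀ x u ν ν', ν ∈ subProb 𝒳 → ν' ∈ subProb 𝒳 → |r x u ν - r x u ν'| ≤ L * l1dist ν ν'

/-- A graphon: symmetric, measurable, [0,1]-valued. -/
def IsGraphon (W : ℝ → ℝ → ℝ) : Prop :=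
  Measurable (Function.uncurry W) ∧ (∀ a b, W a b = W b a) ∧ ∀ a b, W a b ∈ Set.Icc (0:ℝ) 1

/-- Lipschitz continuity of a graphon on [0,1]². -/
def GraphonLipschitz (W : ℝ → ℝ → ℝ) (L : ℝ) : Prop :=
  ∀ a b a' b' : ℝ, a ∈ Set.Icc (0:ℝ) 1 → b ∈ Set.Icc (0:ℝ) 1 → a' ∈ Set.Icc (0:ℝ) 1 →
    b' ∈ Set.Icc (0:ℝ) 1 → |W a b - W a' b'| ≤ L * (|a - a'| + |b - b'|)

/-- The neighborhood mean field 𝔾^α = ∫₀¹ W(α,β) ν^β dβ of a state marginal ensemble ν. -/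
noncomputable def nbhd [Fintype 𝒳] (W : ℝ → ℝ → ℝ) (ν : ℝ → 𝒳 → ℝ) (α : ℝ) : 𝒳 → ℝ :=
  fun x => ∫ β in Set.Ioc (0:ℝ) 1, W α β * ν β x

/-- 𝛍 = Ψ(𝛑): the (measurable) mean field ensemble generated by the policy ensemble 𝛑,
via μ^α_0 = μ₀ and
μ^α_{t+1}(x') = Σ_{x,u} μ^α_t(x) π^α_t(u|x) P(x'|x,u,𝔾^α_t). -/
def IsMeanFieldOf [Fintype 𝒳] [Fintype 𝒰] (W : ℝ → ℝ → ℝ) (P : 𝒳 → 𝒰 → (𝒳 → ℝ) → 𝒳 → ℝ)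
    (μ0 : 𝒳 → ℝ) (πe : ℝ → ℕ → 𝒳 → 𝒰 → ℝ) (μ : ℕ → ℝ → 𝒳 → ℝ) : Prop :=
  (∀ t x, Measurable fun α => μ t α x) ∧
  (∀ α ∈ Set.Icc (0:ℝ) 1, μ 0 α = μ0) ∧
  ∀ t : ℕ, ∀ α ∈ Set.Icc (0:ℝ) 1, ∀ x' : 𝒳,
    μ (t+1) α x' = ∑ x, μ t α x * ∑ u, πe α t x u * P x u (nbhd W (μ t) α) x'

/-- The law of the state of a single mean field agent with neighborhood mean field
G and policy π: X_0 ∼ μ₀, U_t ∼ π_t(·|X_t), X_{t+1} ∼ P(·|X_t,U_t,G_t). -/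
noncomputable def stateLaw [Fintype 𝒳] [Fintype 𝒰] (P : 𝒳 → 𝒰 → (𝒳 → ℝ) → 𝒳 → ℝ)
    (μ0 : 𝒳 → ℝ) (G : ℕ → 𝒳 → ℝ) (π : ℕ → 𝒳 → 𝒰 → ℝ) : ℕ → 𝒳 → ℝ
  | 0 => μ0
  | (t+1) => fun x' => ∑ x, stateLaw P μ0 G π t x * ∑ u, π t x u * P x u (G t) x'

/-- Mean field objective J(π) = E[Σ_{t<T} r(X_t,U_t,G_t)] of a single agent whose
neighborhood mean field is G. -/
noncomputable def Jmf [Fintype 𝒳] [Fintype 𝒰] (T : ℕ) (r : 𝒳 → 𝒰 → (𝒳 → ℝ) → ℝ)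
    (P : 𝒳 → 𝒰 → (𝒳 → ℝ) → 𝒳 → ℝ) (μ0 : 𝒳 → ℝ) (G : ℕ → 𝒳 → ℝ) (π : ℕ → 𝒳 → 𝒰 → ℝ) : ℝ :=
  ∑ t ∈ Finset.range T, ∑ x, stateLaw P μ0 G π t x * ∑ u, π t x u * r x u (G t)

/-- A Graphon Mean Field Equilibrium: a measurable policy ensemble 𝛑 and mean field
ensemble 𝛍 with 𝛍 = Ψ(𝛑) and π^α optimal for J^𝛍_α for every α ∈ [0,1]. -/
def IsGMFE [Fintype 𝒳] [Fintype 𝒰] (T : ℕ) (W : ℝ → ℝ → ℝ) (P : 𝒳 → 𝒰 → (𝒳 → ℝ) → 𝒳 → ℝ)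
    (r : 𝒳 → 𝒰 → (𝒳 → ℝ) → ℝ) (μ0 : 𝒳 → ℝ)
    (πe : ℝ → ℕ → 𝒳 → 𝒰 → ℝ) (μ : ℕ → ℝ → 𝒳 → ℝ) : Prop :=
  (∀ t x u, Measurable fun α => πe α t x u) ∧
  (∀ α ∈ Set.Icc (0:ℝ) 1, IsPolicy (πe α)) ∧
  IsMeanFieldOf W P μ0 πe μ ∧
  ∀ α ∈ Set.Icc (0:ℝ) 1, ∀ π' : ℕ → 𝒳 → 𝒰 → ℝ, IsPolicy π' →
    Jmf T r P μ0 (fun t => nbhd W (μ t) α) π' ≤ Jmf T r P μ0 (fun t => nbhd W (μ t) α) (πe α)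

/-- α ↦ π^α is Lipschitz continuous up to a finite set D of discontinuities. -/
def EnsembleLipschitzUpTo [Fintype 𝒳] [Fintype 𝒰] (πe : ℝ → ℕ → 𝒳 → 𝒰 → ℝ) : Prop :=
  ∃ (L : ℝ) (D : Finset ℝ), ∀ (t : ℕ) (x : 𝒳) (u : 𝒰),
    ∀ α ∈ Set.Icc (0:ℝ) 1, ∀ β ∈ Set.Icc (0:ℝ) 1,
      (∀ d ∈ D, d ∉ Set.uIcc α β) → |πe α t x u - πe β t x u| ≤ L * |α - β|

/-- Edge indicators of a simple (undirected) graph. -/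
def IsEdgeWeights {N : ℕ} (ξ : Fin N → Fin N → ℝ) : Prop :=
  (∀ i j, ξ i j = 0 ∨ ξ i j = 1) ∧ ∀ i j, ξ i j = ξ j i

/-- Empirical neighborhood mean field 𝔾ⁱ = (1/N) Σ_j ξ_{ij} δ_{X^j}. -/
noncomputable def empNbhd [Fintype 𝒳] [DecidableEq 𝒳] {N : ℕ} (ξ : Fin N → Fin N → ℝ)
    (X : Fin N → 𝒳) (i : Fin N) : 𝒳 → ℝ :=
  fun x => (N : ℝ)⁻¹ * ∑ j, ξ i j * (if X j = x then 1 else 0)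

/-- The joint law of the N agents' states at time t: X^i_0 ∼ μ₀ i.i.d.,
U^i_t ∼ π^i_t(·|X^i_t), X^i_{t+1} ∼ P(·|X^i_t,U^i_t,𝔾^i_t) conditionally independently. -/
noncomputable def jointLaw [Fintype 𝒳] [DecidableEq 𝒳] [Fintype 𝒰] {N : ℕ}
    (P : 𝒳 → 𝒰 → (𝒳 → ℝ) → 𝒳 → ℝ) (μ0 : 𝒳 → ℝ) (ξ : Fin N → Fin N → ℝ)
    (πs : Fin N → ℕ → 𝒳 → 𝒰 → ℝ) : ℕ → (Fin N → 𝒳) → ℝ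
  | 0 => fun X => ∏ i, μ0 (X i)
  | (t+1) => fun Y => ∑ X : Fin N → 𝒳, jointLaw P μ0 ξ πs t X *
      ∏ i, ∑ u, πs i t (X i) u * P (X i) u (empNbhd ξ X i) (Y i)

/-- The objective J^N_i = E[Σ_{t<T} r(X^i_t,U^i_t,𝔾^i_t)] of agent i in the N-agent game. -/
noncomputable def JN [Fintype 𝒳] [DecidableEq 𝒳] [Fintype 𝒰] {N : ℕ} (T : ℕ)
    (r : 𝒳 → 𝒰 → (𝒳 → ℝ) → ℝ) (P : 𝒳 → 𝒰 → (𝒳 → ℝ) → 𝒳 → ℝ) (μ0 : 𝒳 → ℝ)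
    (ξ : Fin N → Fin N → ℝ) (πs : Fin N → ℕ → 𝒳 → 𝒰 → ℝ) (i : Fin N) : ℝ :=
  ∑ t ∈ Finset.range T, ∑ X : Fin N → 𝒳, jointLaw P μ0 ξ πs t X *
    ∑ u, πs i t (X i) u * r (X i) u (empNbhd ξ X i)

/-- Γ_N(𝛑) = (π^{1/N},…,π^{N/N}) (agent i : Fin N has graphon index (i+1)/N). -/
noncomputable def gammaN (πe : ℝ → ℕ → 𝒳 → 𝒰 → ℝ) (N : ℕ) : Fin N → ℕ → 𝒳 → 𝒰 → ℝ :=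
  fun i => πe ((((i : ℕ) : ℝ) + 1) / N)

/-- The step graphon W_N of a finite graph: W_N(x,y) = ξ_{⌈Nx⌉,⌈Ny⌉}. -/
noncomputable def stepGraphon {N : ℕ} (ξ : Fin N → Fin N → ℝ) : ℝ → ℝ → ℝ := fun a b =>
  ∑ i : Fin N, ∑ j : Fin N,
    (if ((i : ℕ) : ℝ) / N < a ∧ a ≤ (((i : ℕ) : ℝ) + 1) / N then 1 else 0) *
    (if ((j : ℕ) : ℝ) / N < b ∧ b ≤ (((j : ℕ) : ℝ) + 1) / N then 1 else 0) * ξ i j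

/-- Assumption (W): ‖W_N − W‖_{L∞→L1} → 0, i.e.
sup_{‖g‖∞ ≤ 1} ∫₀¹ |∫₀¹ (W_N(α,β) − W(α,β)) g(β) dβ| dα → 0. -/
def OpConvergesTo (WN : (N : ℕ) → ℝ → ℝ → ℝ) (W : ℝ → ℝ → ℝ) : Prop :=
  ∀ ε > (0:ℝ), ∃ N₀ : ℕ, ∀ N ≥ N₀, ∀ g : ℝ → ℝ, Measurable g → (∀ β, |g β| ≤ 1) →
    (∫ α in Set.Ioc (0:ℝ) 1, |∫ β in Set.Ioc (0:ℝ) 1, (WN N α β - W α β) * g β|) ≤ ε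

/-- ‖W_N − W‖_{L∞→L1} = O(1/√N). -/
def OpRateSqrt (WN : (N : ℕ) → ℝ → ℝ → ℝ) (W : ℝ → ℝ → ℝ) : Prop :=
  ∃ C : ℝ, ∀ N : ℕ, 1 ≤ N → ∀ g : ℝ → ℝ, Measurable g → (∀ β, |g β| ≤ 1) →
    (∫ α in Set.Ioc (0:ℝ) 1, |∫ β in Set.Ioc (0:ℝ) 1, (WN N α β - W α β) * g β|) ≤ C / Real.sqrt N

/-- 𝛍^N_t(f) = ∫₀¹ f(X^{⌈Nα⌉}, α) dα, the integral of f against the random empirical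
step measure ensemble. -/
noncomputable def empInt [Fintype 𝒳] {N : ℕ} (f : 𝒳 → ℝ → ℝ) (X : Fin N → 𝒳) : ℝ :=
  ∑ i : Fin N, ∫ α in Set.Ioc (((i : ℕ) : ℝ) / N) ((((i : ℕ) : ℝ) + 1) / N), f (X i) α

/-- 𝛍_t(f) = ∫₀¹ Σ_x f(x,α) μ^α_t(x) dα. -/
noncomputable def mfInt [Fintype 𝒳] (f : 𝒳 → ℝ → ℝ) (ν : ℝ → 𝒳 → ℝ) : ℝ :=
  ∫ α in Set.Ioc (0:ℝ) 1, ∑ x, f x α * ν α x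

/-- The representative α_m = (m+1)/M of the m-th equivalence class Ĩ_m = (m/M,(m+1)/M]. -/
noncomputable def rep (M : ℕ) (m : Fin M) : ℝ := (((m : ℕ) : ℝ) + 1) / M

/-- Discretized neighborhood mean field 𝔾̂^{α_m} = (1/M) Σ_n W(α_m,α_n) ν^{α_n}. -/
noncomputable def approxNbhd [Fintype 𝒳] {M : ℕ} (W : ℝ → ℝ → ℝ) (ν : Fin M → 𝒳 → ℝ)
    (m : Fin M) : 𝒳 → ℝ :=
  fun x => (M : ℝ)⁻¹ * ∑ n, W (rep M m) (rep M n) * ν n x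

/-- The approximate mean field μ̂ = Ψ̂(𝛑) of the M equivalence classes method. -/
noncomputable def approxMF [Fintype 𝒳] [Fintype 𝒰] {M : ℕ} (W : ℝ → ℝ → ℝ)
    (P : 𝒳 → 𝒰 → (𝒳 → ℝ) → 𝒳 → ℝ) (μ0 : 𝒳 → ℝ) (πm : Fin M → ℕ → 𝒳 → 𝒰 → ℝ) :
    ℕ → Fin M → 𝒳 → ℝ
  | 0 => fun _ => μ0
  | (t+1) => fun m x' => ∑ x, approxMF W P μ0 πm t m x *
      ∑ u, πm m t x u * P x u (approxNbhd W (approxMF W P μ0 πm t) m) x'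

/-- A solution (𝛑, 𝛍) of the M equivalence classes method: 𝛑 is determined by policies
π^{α_m} (one per class), each optimal for the generated approximate mean field 𝛍 = Ψ̂(𝛑). -/
def IsEqClassSolution [Fintype 𝒳] [Fintype 𝒰] (T : ℕ) {M : ℕ} (W : ℝ → ℝ → ℝ)
    (P : 𝒳 → 𝒰 → (𝒳 → ℝ) → 𝒳 → ℝ) (r : 𝒳 → 𝒰 → (𝒳 → ℝ) → ℝ) (μ0 : 𝒳 → ℝ)
    (πm : Fin M → ℕ → 𝒳 → 𝒰 → ℝ) : Prop :=
  (∀ m, IsPolicy (πm m)) ∧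
  ∀ m, ∀ π' : ℕ → 𝒳 → 𝒰 → ℝ, IsPolicy π' →
    Jmf T r P μ0 (fun t => approxNbhd W (approxMF W P μ0 πm t) m) π'
      ≤ Jmf T r P μ0 (fun t => approxNbhd W (approxMF W P μ0 πm t) m) (πm m)

/-- The optimal action value function Q with k steps to go from time t,
Q(t,x,u) = r(x,u,G_t) + Σ_{x'} P(x'|x,u,G_t) max_{u'} Q(t+1,x',u'). -/
noncomputable def Qfun [Fintype 𝒳] [Fintype 𝒰] [Nonempty 𝒰] (r : 𝒳 → 𝒰 → (𝒳 → ℝ) → ℝ)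
    (P : 𝒳 → 𝒰 → (𝒳 → ℝ) → 𝒳 → ℝ) (G : ℕ → 𝒳 → ℝ) : ℕ → ℕ → 𝒳 → 𝒰 → ℝ
  | 0 => fun _ _ _ => 0
  | (k+1) => fun t x u => r x u (G t) + ∑ x', P x u (G t) x' *
      Finset.univ.sup' Finset.univ_nonempty (fun u' => Qfun r P G k (t+1) x' u')

/-- The Boltzmann (softmax) policy Φ̂_η(𝛍) of the M equivalence classes method with
horizon T, temperature η and block mean field ν. -/
noncomputable def boltzmann [Fintype 𝒳] [Fintype 𝒰] [Nonempty 𝒰] (T : ℕ) (η : ℝ)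
    (r : 𝒳 → 𝒰 → (𝒳 → ℝ) → ℝ) (P : 𝒳 → 𝒰 → (𝒳 → ℝ) → 𝒳 → ℝ) (W : ℝ → ℝ → ℝ) {M : ℕ}
    (ν : ℕ → Fin M → 𝒳 → ℝ) : Fin M → ℕ → 𝒳 → 𝒰 → ℝ :=
  fun m t x u =>
    Real.exp (Qfun r P (fun s => approxNbhd W (ν s) m) (T - t) t x u / η) /
      ∑ u' : 𝒰, Real.exp (Qfun r P (fun s => approxNbhd W (ν s) m) (T - t) t x u' / η)

/-- One step 𝛍 ↦ Ψ̂(Φ̂_η(𝛍)) of the Boltzmann fixed point iteration. -/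
noncomputable def boltzIter [Fintype 𝒳] [Fintype 𝒰] [Nonempty 𝒰] (T : ℕ) (η : ℝ)
    (r : 𝒳 → 𝒰 → (𝒳 → ℝ) → ℝ) (P : 𝒳 → 𝒰 → (𝒳 → ℝ) → 𝒳 → ℝ) (W : ℝ → ℝ → ℝ) (μ0 : 𝒳 → ℝ)
    {M : ℕ} (ν : ℕ → Fin M → 𝒳 → ℝ) : ℕ → Fin M → 𝒳 → ℝ :=
  fun t => approxMF W P μ0 (boltzmann T η r P W ν) t

/-!
A Markov strategy is replaced by a mixture of the finitely many deterministic plans. By Kuhn's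
argument, playing each plan with its posterior probability given the current state turns a mixture
into a Markov policy with the same state laws and the same value, and by dynamic programming some
plan is optimal. A graphon mean field equilibrium is thus an equilibrium of a static graphon game
with a finite action set, in which the neighborhood field felt by a player is `∫ W(α, β) m(β) dβ`,
where `m` is an expected contribution of the other players.

Since this integral operator is compact, it turns weak into pointwise convergence. Replacing the
best response by a continuous `ε`-optimal response, the fields solve a fixed point problem for a
completely continuous bounded map of a separable Hilbert space, which Galerkin approximation reduces
to Brouwer's theorem. As `ε → 0`, the mixed actions and the contributions converge weakly along a
subsequence and the fields converge at every player; the equilibrium conditions, being linear in the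
mixed actions, pass to the limit almost everywhere. On the exceptional null set the players may be
given any measurable best response without changing the fields.

Brouwer's theorem is deduced from Scarf's lemma on dominant sets of linear orders, applied to the
grid points of a simplex ordered by their coordinates.
-/

section Scarf

variable {I S R : Type*}

theorem card_filter_image_erase_eq_two [DecidableEq I] [DecidableEq S] {B : Finset S} {c : S → I}
    (h : (B.image c).card + 1 = B.card) :
    (B.filter fun x => (B.erase x).image c = B.image c).card = 2 := by
  obtain ⟨x, hx, y, hy, hxy, hcxy⟩ := Finset.exists_ne_map_eq_of_card_lt_of_maps_to
    (s := B) (t := B.image c) (by lia) fun b => Finset.mem_image_of_mem c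
  have image_erase : ∀ {x y}, x ∈ B → y ∈ B → x ≠ y → c x = c y →
      (B.erase x).image c = B.image c := by
    intro x y hx hy hxy hcxy
    conv_rhs => rw [← Finset.insert_erase hx, Finset.image_insert]
    exact (Finset.insert_eq_of_mem
      (hcxy ▸ Finset.mem_image_of_mem c (Finset.mem_erase.2 ⟨hxy.symm, hy⟩))).symm
  have injOn : Set.InjOn c (B.erase x) := Finset.card_image_iff.1 <| by
    rw [image_erase hx hy hxy hcxy, Finset.card_erase_of_mem hx]; lia
  refine Finset.card_eq_two.2 ⟨x, y, hxy, ?_⟩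
  ext z
  simp only [Finset.mem_filter, Finset.mem_insert, Finset.mem_singleton]
  constructor
  · rintro ⟨hz, himg⟩
    obtain ⟨w, hw, hcw⟩ := Finset.mem_image.1 (himg ▸ Finset.mem_image_of_mem c hz)
    obtain ⟨hwz, hwB⟩ := Finset.mem_erase.1 hw
    by_contra! hzxy
    have hwx : w = x := by
      by_contra hwx
      exact hwz (injOn (by simp [hwx, hwB]) (by simp [hzxy.1, hz]) hcw)
    exact hzxy.2 (injOn (by simp [hzxy.1, hz]) (by simp [hxy.symm, hy])
      (by rw [← hcw, hwx, hcxy]))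
  · rintro (rfl | rfl)
    exacts [⟨hx, image_erase hx hy hxy hcxy⟩, ⟨hy, image_erase hy hx hxy.symm hcxy.symm⟩]

variable [LinearOrder R] {rk : I → S → R} {D : Finset S} {f : I → S} {j : I} {x : S}

/-- Scarf's dominant sets: no `y` is ranked above the worst element of `B` by every `i`. -/
def IsDominant (rk : I → S → R) (B : Finset S) : Prop :=
  ∀ y, ∃ i, ∀ x ∈ B, rk i y ≤ rk i x

/-- `f i` is the element of `D` ranked lowest by `i`. -/
def IsArgmin (rk : I → S → R) (D : Finset S) (f : I → S) : Prop :=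
  ∀ i, f i ∈ D ∧ ∀ x ∈ D, rk i (f i) ≤ rk i x

/-- The points ranked strictly above `f i` by every `i ≠ j`. If `f` lists the lowest elements of
`D`, then replacing `D` by `insert x D` with the `j`-best such point `x` is a pivot step. -/
def aboveExcept (rk : I → S → R) (f : I → S) (j : I) : Set S :=
  {y | ∀ i ≠ j, rk i (f i) < rk i y}

theorem IsDominant.mono {B : Finset S} (h : IsDominant rk B) (hD : D ⊆ B) : IsDominant rk D :=
  fun y => (h y).imp fun _ hi x hx => hi x (hD hx)

theorem IsArgmin.exists_eq_lt (hrk : ∀ i, Function.Injective (rk i)) (hf : IsArgmin rk D f)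
    [DecidableEq S] (hx : x ∉ D) (hxD : IsDominant rk (insert x D)) {a : S} (ha : a ∈ D) :
    ∃ i, f i = a ∧ rk i a < rk i x := by
  obtain ⟨i, hi⟩ := hxD a
  have hfa : f i = a := hrk i <|
    le_antisymm ((hf i).2 a ha) (hi _ (Finset.mem_insert_of_mem (hf i).1))
  refine ⟨i, hfa, (hi x (Finset.mem_insert_self x D)).lt_of_ne fun h => hx (hrk i h ▸ ha)⟩

theorem IsArgmin.image_eq [Fintype I] [DecidableEq S] (hrk : ∀ i, Function.Injective (rk i))
    (hf : IsArgmin rk D f) (hD : IsDominant rk D) : Finset.univ.image f = D := by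
  ext a
  simp only [Finset.mem_image, Finset.mem_univ, true_and]
  refine ⟨fun ⟨i, hi⟩ => hi ▸ (hf i).1, fun ha => ?_⟩
  obtain ⟨i, hi⟩ := hD a
  exact ⟨i, hrk i (le_antisymm ((hf i).2 a ha) (hi _ (hf i).1))⟩

theorem IsArgmin.isDominant_insert [Fintype I] [DecidableEq I] [DecidableEq S]
    (hf : IsArgmin rk D f) (hD : IsDominant rk D) (hj : (Finset.univ.erase j).image f = D)
    (hx : x ∈ aboveExcept rk f j) (hmax : IsMaxOn (rk j) (aboveExcept rk f j) x) :
    x ∉ D ∧ IsDominant rk (insert x D) := by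
  have hxj : ∀ z ∈ D, rk j x ≤ rk j z := by
    obtain ⟨i, hi⟩ := hD x
    obtain rfl : i = j := by
      by_contra hij
      exact (hx i hij).not_ge (hi _ (hf i).1)
    exact hi
  constructor
  · intro hxD
    rw [← hj] at hxD
    obtain ⟨i, hi, rfl⟩ := Finset.mem_image.1 hxD
    exact (hx i (Finset.ne_of_mem_erase hi)).false
  · intro y
    by_cases hy : y ∈ aboveExcept rk f j
    · refine ⟨j, Finset.forall_mem_insert .. |>.2 ⟨hmax hy, fun z hz => ?_⟩⟩
      exact (hmax hy).trans (hxj z hz)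
    · simp only [aboveExcept, Set.mem_ofPred_eq, not_forall, not_lt] at hy
      obtain ⟨i, hij, hi⟩ := hy
      exact ⟨i, Finset.forall_mem_insert .. |>.2
        ⟨hi.trans (hx i hij).le, fun z hz => hi.trans ((hf i).2 z hz)⟩⟩

theorem IsArgmin.exists_isMaxOn_aboveExcept [Fintype I] [DecidableEq I] [DecidableEq S]
    (hrk : ∀ i, Function.Injective (rk i)) (hf : IsArgmin rk D f)
    (hcard : D.card + 1 = Fintype.card I) (hx : x ∉ D) (hxD : IsDominant rk (insert x D)) :
    ∃ j, (Finset.univ.erase j).image f = D ∧ x ∈ aboveExcept rk f j ∧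
      IsMaxOn (rk j) (aboveExcept rk f j) x := by
  obtain ⟨j, hj⟩ := hxD x
  have witness : ∀ a ∈ D, ∃ i, i ≠ j ∧ f i = a ∧ rk i a < rk i x := by
    intro a ha
    obtain ⟨i, hia, hlt⟩ := hf.exists_eq_lt hrk hx hxD ha
    refine ⟨i, ?_, hia, hlt⟩
    rintro rfl
    exact hlt.not_ge (hj a (Finset.mem_insert_of_mem ha))
  have himg : (Finset.univ.erase j).image f = D := by
    refine le_antisymm (Finset.image_subset_iff.2 fun i _ => (hf i).1) fun a ha => ?_
    obtain ⟨i, hij, hia, -⟩ := witness a ha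
    exact Finset.mem_image.2 ⟨i, by simp [hij], hia⟩
  have injOn : Set.InjOn f (Finset.univ.erase j : Finset I) := Finset.card_image_iff.1 <| by
    rw [himg, Finset.card_erase_of_mem (Finset.mem_univ j), Finset.card_univ]; lia
  refine ⟨j, himg, fun i hij => ?_, fun y hy => ?_⟩
  · obtain ⟨i', hi'j, hfi, hlt⟩ := witness (f i) (hf i).1
    rwa [injOn (by simpa using hi'j) (by simpa using hij) hfi] at hlt
  · obtain ⟨i, hi⟩ := hxD y
    by_cases hij : i = j
    · exact hij ▸ hi x (Finset.mem_insert_self x D)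
    · exact absurd (hi _ (Finset.mem_insert_of_mem (hf i).1)) (hy i hij).not_ge

open Classical in
theorem IsArgmin.card_isDominant_insert [Fintype I] [Fintype S]
    (hrk : ∀ i, Function.Injective (rk i)) (hf : IsArgmin rk D f) (hD : IsDominant rk D)
    (hcard : D.card + 1 = Fintype.card I) :
    (Finset.univ.filter fun x => x ∉ D ∧ IsDominant rk (insert x D)).card =
      (Finset.univ.filter fun j =>
        (Finset.univ.erase j).image f = D ∧ (aboveExcept rk f j).Nonempty).card := by
  obtain ⟨i₀⟩ : Nonempty I := Fintype.card_pos_iff.1 (by lia)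
  have : Nonempty S := ⟨f i₀⟩
  have exists_max : ∀ j, (aboveExcept rk f j).Nonempty →
      ∃ x ∈ aboveExcept rk f j, IsMaxOn (rk j) (aboveExcept rk f j) x :=
    fun j hj => Set.exists_max_image _ (rk j) (Set.toFinite _) hj
  choose! best best_mem best_max using exists_max
  symm
  refine Finset.card_bij (fun j _ => best j) ?_ ?_ ?_
  · intro j hj
    obtain ⟨himg, hne⟩ := (Finset.mem_filter.1 hj).2
    simpa using hf.isDominant_insert hD himg (best_mem j hne) (best_max j hne)
  · intro j hj k hk hjk
    have hbj := best_mem j (Finset.mem_filter.1 hj).2.2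
    have hbk := best_mem k (Finset.mem_filter.1 hk).2.2
    by_contra hne
    obtain ⟨i, hi⟩ := hD (best j)
    by_cases hij : i = j
    · exact (hbk i (hij ▸ hne)).not_ge (hjk ▸ hi _ (hf i).1)
    · exact (hbj i hij).not_ge (hi _ (hf i).1)
  · intro x hx
    obtain ⟨hxD, hdom⟩ := (Finset.mem_filter.1 hx).2
    obtain ⟨j, himg, hxj, hmax⟩ := hf.exists_isMaxOn_aboveExcept hrk hcard hxD hdom
    exact ⟨j, by simpa using ⟨himg, ⟨x, hxj⟩⟩,
      hrk j (le_antisymm (hmax (best_mem j ⟨x, hxj⟩)) (best_max j ⟨x, hxj⟩ hxj))⟩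

theorem exists_isArgmin (rk : I → S → R) (hD : D.Nonempty) : ∃ f, IsArgmin rk D f := by
  choose f hf using fun i => Finset.exists_min_image D (rk i) hD
  exact ⟨f, hf⟩

/-- `s i` is the `i`-th slack vector: lowest for `i`, but above every ordinary point for the other
indices. The slack vectors play the role of the vertices of the simplex in Scarf's lemma. -/
structure IsSlack (rk : I → S → R) (s : I → S) : Prop where
  le : ∀ i y, rk i (s i) ≤ rk i y
  lt : ∀ x ∉ Set.range s, ∀ i j, i ≠ j → rk i x < rk i (s j)

variable {s : I → S}

open Classical in
theorem IsSlack.card_isDominant_insert_eq_two [Fintype I] [Fintype S] (hs : IsSlack rk s)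
    (hrk : ∀ i, Function.Injective (rk i)) (hD : IsDominant rk D)
    (hcard : D.card + 1 = Fintype.card I) (hDs : ¬ (D : Set S) ⊆ Set.range s) :
    (Finset.univ.filter fun x => x ∉ D ∧ IsDominant rk (insert x D)).card = 2 := by
  obtain ⟨x, hxD, hx⟩ := Set.not_subset.1 hDs
  obtain ⟨f, hf⟩ := exists_isArgmin rk ⟨x, hxD⟩
  have nonempty : ∀ j, (aboveExcept rk f j).Nonempty := fun j =>
    ⟨s j, fun i hij => ((hf i).2 x hxD).trans_lt (hs.lt x hx i j hij)⟩
  have himg := hf.image_eq hrk hD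
  rw [hf.card_isDominant_insert hrk hD hcard, ← card_filter_image_erase_eq_two (c := f)
    (B := Finset.univ) (by rw [himg, hcard, Finset.card_univ]), himg]
  simp only [nonempty, and_true]

theorem IsSlack.not_le (hs : IsSlack rk s) (hrk : ∀ i, Function.Injective (rk i))
    (hx : x ∉ Set.range s) (i : I) : ¬ rk i x ≤ rk i (s i) :=
  fun h => hx ⟨i, hrk i (le_antisymm (hs.le i x) h)⟩

open Classical in
theorem IsSlack.isDominant_insert_image_erase [Fintype I] (hs : IsSlack rk s) {i₀ : I}
    (hmax : IsMaxOn (rk i₀) (Set.range s)ᶜ x) :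
    IsDominant rk (insert x ((Finset.univ.erase i₀).image s)) := by
  intro y
  by_cases hy : y ∈ Set.range s
  · obtain ⟨l, rfl⟩ := hy
    exact ⟨l, fun x _ => hs.le l x⟩
  · refine ⟨i₀, Finset.forall_mem_insert .. |>.2 ⟨hmax hy, fun z hz => ?_⟩⟩
    obtain ⟨l, hl, rfl⟩ := Finset.mem_image.1 hz
    exact (hs.lt y hy i₀ l (Finset.ne_of_mem_erase hl).symm).le

open Classical in
theorem IsSlack.card_isDominant_insert_eq_one [Fintype I] [Fintype S] (hs : IsSlack rk s)
    (hrk : ∀ i, Function.Injective (rk i)) (hne : (Set.range s)ᶜ.Nonempty) (i₀ : I) :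
    (Finset.univ.filter fun x => x ∉ (Finset.univ.erase i₀).image s ∧
      IsDominant rk (insert x ((Finset.univ.erase i₀).image s))).card = 1 := by
  obtain ⟨x, hx, hmax⟩ := Set.exists_max_image _ (rk i₀) (Set.toFinite _) hne
  have mem_image : ∀ {i}, i ≠ i₀ → s i ∈ (Finset.univ.erase i₀).image s :=
    fun hi => Finset.mem_image_of_mem s (by simp [hi])
  refine Finset.card_eq_one.2 ⟨x, ?_⟩
  ext z
  simp only [Finset.mem_filter, Finset.mem_univ, true_and, Finset.mem_singleton]
  constructor
  · rintro ⟨hz, hdom⟩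
    obtain ⟨i, hi⟩ := hdom x
    obtain rfl : i = i₀ := by
      by_contra h
      exact hs.not_le hrk hx i (hi _ (Finset.mem_insert_of_mem (mem_image h)))
    have hzs : z ∉ Set.range s := by
      rintro ⟨l, rfl⟩
      obtain rfl : l = i := by
        by_contra h
        exact hz (mem_image h)
      exact hs.not_le hrk hx l (hi _ (Finset.mem_insert_self _ _))
    exact hrk i (le_antisymm (hmax z hzs) (hi z (Finset.mem_insert_self _ _)))
  · rintro rfl
    refine ⟨fun h => ?_, hs.isDominant_insert_image_erase hmax⟩
    obtain ⟨l, -, hl⟩ := Finset.mem_image.1 h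
    exact hx ⟨l, hl⟩

theorem image_image_eq_of_subset_range [DecidableEq I] [DecidableEq S] {c : S → I} {s : I → S}
    (hcs : Function.LeftInverse c s) {D : Finset S} (hD : (D : Set S) ⊆ Set.range s) :
    (D.image c).image s = D := by
  rw [Finset.image_image, Finset.image_congr (g := id) fun x hx => ?_, Finset.image_id]
  obtain ⟨i, rfl⟩ := hD hx
  exact congrArg s (hcs i)

open Classical in
theorem sum_card_isDominant_insert_eq [Fintype S] {J : Finset I} {c : S → I} (n : ℕ)
    (hJ : ∀ D x, D.image c = J → IsDominant rk (insert x D) → c x ∈ J) :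
    ∑ D : Finset S with IsDominant rk D ∧ D.card = n ∧ D.image c = J,
        (Finset.univ.filter fun x => x ∉ D ∧ IsDominant rk (insert x D)).card =
      ∑ B : Finset S with IsDominant rk B ∧ B.card = n + 1 ∧ B.image c = J,
        (B.filter fun x => (B.erase x).image c = B.image c).card := by
  simp only [← Finset.card_sigma]
  refine Finset.card_nbij' (fun p => ⟨insert p.2 p.1, p.2⟩) (fun p => ⟨p.1.erase p.2, p.2⟩)
    ?_ ?_ ?_ ?_
  · rintro ⟨D, x⟩ h
    simp only [Finset.coe_sigma, Set.mem_sigma_iff, Finset.mem_coe, Finset.mem_filter,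
      Finset.mem_univ, true_and] at h ⊢
    obtain ⟨⟨-, hcard, himg⟩, hx, hdom⟩ := h
    have himg' : (insert x D).image c = J := by
      rw [Finset.image_insert, himg, Finset.insert_eq_of_mem (hJ D x himg hdom)]
    exact ⟨⟨hdom, by rw [Finset.card_insert_of_notMem hx, hcard], himg'⟩,
      Finset.mem_insert_self x D, by rw [Finset.erase_insert hx, himg, himg']⟩
  · rintro ⟨B, x⟩ h
    simp only [Finset.coe_sigma, Set.mem_sigma_iff, Finset.mem_coe, Finset.mem_filter,
      Finset.mem_univ, true_and] at h ⊢
    obtain ⟨⟨hdom, hcard, himg⟩, hx, herase⟩ := h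
    exact ⟨⟨hdom.mono (Finset.erase_subset x B), by rw [Finset.card_erase_of_mem hx, hcard]; rfl,
      herase.trans himg⟩, Finset.notMem_erase x B, by rwa [Finset.insert_erase hx]⟩
  · rintro ⟨D, x⟩ h
    simp only [Finset.coe_sigma, Set.mem_sigma_iff, Finset.mem_coe, Finset.mem_filter] at h
    simp only [Finset.erase_insert h.2.2.1]
  · rintro ⟨B, x⟩ h
    simp only [Finset.coe_sigma, Set.mem_sigma_iff, Finset.mem_coe, Finset.mem_filter] at h
    simp only [Finset.insert_erase h.2.1]

open Classical in
/-- Scarf's lemma. -/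
theorem IsSlack.exists_isDominant_surjOn [Finite I] [Nonempty I] [Finite S]
    (hs : IsSlack rk s) (hrk : ∀ i, Function.Injective (rk i))
    (hne : (Set.range s)ᶜ.Nonempty) {c : S → I} (hcs : Function.LeftInverse c s) :
    ∃ B : Finset S, IsDominant rk B ∧ Set.SurjOn c B Set.univ := by
  cases nonempty_fintype I
  cases nonempty_fintype S
  by_contra! hno
  obtain ⟨i₀⟩ := ‹Nonempty I›
  set J := Finset.univ.erase i₀
  set doors := Finset.univ.filter fun D : Finset S =>
    IsDominant rk D ∧ D.card = J.card ∧ D.image c = J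
  have hJ : J.card + 1 = Fintype.card I := Finset.card_erase_add_one (Finset.mem_univ i₀)
  have mem_J : ∀ D x, D.image c = J → IsDominant rk (insert x D) → c x ∈ J := by
    refine fun D x himg hdom => Finset.mem_erase.2 ⟨fun hcx => hno _ hdom ?_, Finset.mem_univ _⟩
    rw [Set.SurjOn, ← Finset.coe_image, Finset.image_insert, himg, hcx,
      Finset.insert_erase (Finset.mem_univ i₀), Finset.coe_univ]
  have hJs : J.image s ∈ doors := by
    obtain ⟨x, _, hmax⟩ := Set.exists_max_image _ (rk i₀) (Set.toFinite _) hne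
    refine Finset.mem_filter.2 ⟨Finset.mem_univ _,
      (hs.isDominant_insert_image_erase hmax).mono (Finset.subset_insert x (J.image s)),
      Finset.card_image_of_injective _ hcs.injective, ?_⟩
    rw [Finset.image_image, hcs.comp_eq_id, Finset.image_id]
  have doors_erase : ∀ D ∈ doors.erase (J.image s),
      (Finset.univ.filter fun x => x ∉ D ∧ IsDominant rk (insert x D)).card = 2 := by
    intro D hD
    obtain ⟨hne, hD⟩ := Finset.mem_erase.1 hD
    obtain ⟨hdom, hcard, himg⟩ := (Finset.mem_filter.1 hD).2
    exact hs.card_isDominant_insert_eq_two hrk hdom (by rw [hcard, hJ]) fun hDs =>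
      hne (by rw [← himg, image_image_eq_of_subset_range hcs hDs])
  have rooms : ∀ B ∈ Finset.univ.filter fun B : Finset S =>
      IsDominant rk B ∧ B.card = J.card + 1 ∧ B.image c = J,
      (B.filter fun x => (B.erase x).image c = B.image c).card = 2 := fun B hB =>
    have ⟨_, hcard, himg⟩ := (Finset.mem_filter.1 hB).2
    card_filter_image_erase_eq_two (by rw [himg, hcard])
  have hcount := sum_card_isDominant_insert_eq J.card mem_J
  rw [← Finset.add_sum_erase _ _ hJs, hs.card_isDominant_insert_eq_one hrk hne,
    Finset.sum_congr rfl doors_erase, Finset.sum_congr rfl rooms] at hcount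
  simp only [Finset.sum_const, smul_eq_mul] at hcount
  lia

end Scarf

section Brouwer

variable {I S R : Type*}

open Classical in
/-- The ranks `v` extended by one slack vector `Sum.inr i` for each index `i`. The injections `eS`
and `eI` into `ℕ` only break ties. -/
noncomputable def slackRank (v : I → S → R) (eS : S → ℕ) (eI : I → ℕ) (i : I) :
    S ⊕ I → WithBot ((R ×ₗ ℕ) ⊕ₗ ℕ)
  | .inl x => ↑(Sum.inlₗ (toLex (v i x, eS x)) : (R ×ₗ ℕ) ⊕ₗ ℕ)
  | .inr j => if j = i then ⊥ else ↑(Sum.inrₗ (eI j) : (R ×ₗ ℕ) ⊕ₗ ℕ)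

theorem slackRank_injective (v : I → S → R) {eS : S → ℕ} (hS : Function.Injective eS)
    {eI : I → ℕ} (hI : Function.Injective eI) (i : I) :
    Function.Injective (slackRank v eS eI i) := by
  rintro (x | j) (y | k) h
  · simp [slackRank] at h
    simp [hS h.2]
  · by_cases hk : k = i <;> simp [slackRank, hk] at h
  · by_cases hj : j = i <;> simp [slackRank, hj] at h
  · by_cases hj : j = i <;> by_cases hk : k = i
    · rw [hj, hk]
    · simp [slackRank, hj, hk] at h
    · simp [slackRank, hj, hk] at h
    · simpa [slackRank, hj, hk, hI.eq_iff] using h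

variable [LinearOrder R]

theorem isSlack_slackRank (v : I → S → R) (eS : S → ℕ) (eI : I → ℕ) :
    IsSlack (slackRank v eS eI) Sum.inr where
  le i y := by simp [slackRank]
  lt := by
    rintro (x | l) hx i j hij
    · simp [slackRank, hij.symm]
    · exact absurd ⟨l, rfl⟩ hx

theorem exists_finset_forall_exists_le [Finite I] [Finite S] [Nonempty S] (v : I → S → R)
    (c : S → I) :
    ∃ B : Finset S, B.Nonempty ∧ ∀ y, ∃ b ∈ B, ∀ x ∈ B, v (c b) y ≤ v (c b) x := by
  have := Fintype.ofFinite I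
  have := Fintype.ofFinite S
  obtain ⟨x₀⟩ := ‹Nonempty S›
  have : Nonempty I := ⟨c x₀⟩
  obtain ⟨eS, hS⟩ := Countable.exists_injective_nat S
  obtain ⟨eI, hI⟩ := Countable.exists_injective_nat I
  obtain ⟨B, hB, hBc⟩ := (isSlack_slackRank v eS eI).exists_isDominant_surjOn
    (slackRank_injective v hS hI) ⟨Sum.inl x₀, by simp⟩ (c := Sum.elim c id) fun _ => rfl
  have exists_mem : ∀ y, ∃ b, Sum.inl b ∈ B ∧ ∀ x, Sum.inl x ∈ B → v (c b) y ≤ v (c b) x := by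
    intro y
    obtain ⟨i, hi⟩ := hB (Sum.inl y)
    have inr_notMem : Sum.inr i ∉ B := fun h => by simpa [slackRank] using hi _ h
    obtain ⟨b | j, hb, rfl⟩ := hBc (Set.mem_univ i)
    · refine ⟨b, hb, fun x hx => ?_⟩
      have := hi _ hx
      simp only [slackRank, WithBot.coe_le_coe, Sum.Lex.inl_le_inl_iff] at this
      exact (Prod.Lex.monotone_fst _ _ this :)
    · exact absurd hb inr_notMem
  classical
  refine ⟨Finset.univ.filter fun x => Sum.inl x ∈ B, ?_, fun y => ?_⟩
  · obtain ⟨b, hb, -⟩ := exists_mem x₀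
    exact ⟨b, by simpa using hb⟩
  · simpa using exists_mem y

variable [Fintype I]

/-- `n` times the standard simplex, restricted to integer points. -/
def gridSimplex (I : Type*) [Fintype I] (n : ℕ) : Set (I → ℕ) := {a | ∑ i, a i = n}

theorem finite_gridSimplex (n : ℕ) : (gridSimplex I n).Finite := by
  classical
  refine (Set.finite_Icc 0 fun _ : I => n).subset fun a ha => ⟨fun _ => Nat.zero_le _, fun i => ?_⟩
  exact (Finset.single_le_sum (fun _ _ => Nat.zero_le _) (Finset.mem_univ i)).trans_eq ha

theorem exists_labelled_near_corner [Nonempty I] (n : ℕ) (c : (I → ℕ) → I) :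
    ∃ l : I → ℕ, n < ∑ i, (l i + 1) ∧
      ∀ i, ∃ a ∈ gridSimplex I n, l ≤ a ∧ (c a = i ∨ l i = 0) := by
  classical
  obtain ⟨i₀⟩ := ‹Nonempty I›
  have := (finite_gridSimplex (I := I) n).to_subtype
  have : Nonempty (gridSimplex I n) := ⟨Pi.single i₀ n, by simp [gridSimplex]⟩
  obtain ⟨B, hB, hdom⟩ := exists_finset_forall_exists_le
    (fun i (a : gridSimplex I n) => (a : I → ℕ) i) (fun a => c a)
  let l : I → ℕ := fun i => if ∃ b ∈ B, c b = i then B.inf' hB fun a => (a : I → ℕ) i else 0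
  have l_le : ∀ a ∈ B, l ≤ a := by
    intro a ha i
    by_cases hi : ∃ b ∈ B, c b = i
    · simpa only [l, if_pos hi] using Finset.inf'_le _ ha
    · simp only [l, if_neg hi, Nat.zero_le]
  refine ⟨l, ?_, fun i => ?_⟩
  · by_contra! h
    obtain ⟨b, hb, hle⟩ := hdom ⟨fun i => l i + 1 + if i = i₀ then n - ∑ i, (l i + 1) else 0, by
      simpa [gridSimplex, Finset.sum_add_distrib] using Nat.add_sub_cancel' h⟩
    have hlb : l (c b) = B.inf' hB fun a => (a : I → ℕ) (c b) := if_pos ⟨b, hb, rfl⟩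
    have := (Finset.le_inf'_iff hB _).2 hle
    simp only [← hlb] at this
    lia
  · by_cases hi : ∃ b ∈ B, c b = i
    · obtain ⟨b, hb, hbi⟩ := hi
      exact ⟨b, b.2, l_le b hb, Or.inl hbi⟩
    · obtain ⟨b, hb⟩ := hB
      exact ⟨b, b.2, l_le b hb, Or.inr (if_neg hi)⟩

theorem div_mem_stdSimplex {n : ℕ} (hn : n ≠ 0) {a : I → ℕ} (ha : a ∈ gridSimplex I n) :
    (fun i => (a i : ℝ) / n) ∈ stdSimplex ℝ I := by
  refine ⟨fun i => by positivity, ?_⟩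
  rw [← Finset.sum_div, ← Nat.cast_sum, ha, div_self (Nat.cast_ne_zero.2 hn)]

theorem le_add_card_of_mem_gridSimplex {n : ℕ} {l a : I → ℕ} (hl : n < ∑ i, (l i + 1))
    (ha : a ∈ gridSimplex I n) (hla : l ≤ a) (i : I) : a i ≤ l i + Fintype.card I := by
  have hsum : ∑ i, (a i - l i) + ∑ i, l i = n := by
    rw [← Finset.sum_add_distrib, ← ha]
    exact Finset.sum_congr rfl fun i _ => Nat.sub_add_cancel (hla i)
  have hi := Finset.single_le_sum (f := fun i => a i - l i) (fun _ _ => Nat.zero_le _)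
    (Finset.mem_univ i)
  simp only [Finset.sum_add_distrib, Finset.sum_const, Finset.card_univ, smul_eq_mul] at hl
  lia

theorem dist_div_le_of_mem_gridSimplex {n : ℕ} {l a b : I → ℕ} (hl : n < ∑ i, (l i + 1))
    (ha : a ∈ gridSimplex I n) (hb : b ∈ gridSimplex I n) (hla : l ≤ a) (hlb : l ≤ b) :
    dist (fun i => (a i : ℝ) / n) (fun i => (b i : ℝ) / n) ≤ Fintype.card I / n := by
  refine (dist_pi_le_iff (by positivity)).2 fun i => ?_
  rw [Real.dist_eq, ← sub_div, abs_div, Nat.abs_cast]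
  gcongr
  have hab := (le_add_card_of_mem_gridSimplex hl ha hla i).trans (Nat.add_le_add_right (hlb i) _)
  have hba := (le_add_card_of_mem_gridSimplex hl hb hlb i).trans (Nat.add_le_add_right (hla i) _)
  rw [abs_sub_le_iff, sub_le_iff_le_add', sub_le_iff_le_add']
  exact ⟨mod_cast hab, mod_cast hba⟩

theorem exists_approx_fixedPoint [Nonempty I] {f : (I → ℝ) → I → ℝ}
    (hf : Set.MapsTo f (stdSimplex ℝ I) (stdSimplex ℝ I)) {n : ℕ} (hn : n ≠ 0) :
    ∃ q : I → I → ℝ, (∀ i, q i ∈ stdSimplex ℝ I) ∧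
      (∀ i j, dist (q i) (q j) ≤ Fintype.card I / n) ∧
      ∀ i, q i i ≤ f (q i) i + Fintype.card I / n := by
  let pt : (I → ℕ) → I → ℝ := fun a i => a i / n
  have exists_label : ∀ a ∈ gridSimplex I n, ∃ i, pt a i ≤ f (pt a) i := by
    intro a ha
    have hpt := div_mem_stdSimplex hn ha
    by_contra! h
    exact (Finset.sum_lt_sum_of_nonempty Finset.univ_nonempty fun i _ => h i).ne
      ((hf hpt).2.trans hpt.2.symm)
  choose! c hc using exists_label
  obtain ⟨l, hl, hlabel⟩ := exists_labelled_near_corner n c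
  choose a ha hla hac using hlabel
  have hclose : ∀ i j, dist (pt (a i)) (pt (a j)) ≤ Fintype.card I / n := fun i j =>
    dist_div_le_of_mem_gridSimplex hl (ha i) (ha j) (hla i) (hla j)
  refine ⟨fun i => pt (a i), fun i => div_mem_stdSimplex hn (ha i), hclose, fun i => ?_⟩
  rcases hac i with hi | hi
  · have := hc (a i) (ha i)
    rw [hi] at this
    exact this.trans (le_add_of_nonneg_right (by positivity))
  · have hai : a i i ≤ Fintype.card I := by
      simpa [hi] using le_add_card_of_mem_gridSimplex hl (ha i) (hla i) i
    calc pt (a i) i ≤ Fintype.card I / n := by simp only [pt]; gcongr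
      _ ≤ f (pt (a i)) i + Fintype.card I / n :=
        le_add_of_nonneg_left ((hf (div_mem_stdSimplex hn (ha i))).1 i)

theorem exists_fixedPoint_stdSimplex [Nonempty I] {f : (I → ℝ) → I → ℝ}
    (hf : Set.MapsTo f (stdSimplex ℝ I) (stdSimplex ℝ I))
    (hcont : ContinuousOn f (stdSimplex ℝ I)) : ∃ p ∈ stdSimplex ℝ I, f p = p := by
  choose q hq hclose hle using fun n : ℕ => exists_approx_fixedPoint hf n.succ_ne_zero
  obtain ⟨i₀⟩ := ‹Nonempty I›
  obtain ⟨p, hp, φ, hφ, hlim⟩ := (isCompact_stdSimplex ℝ I).tendsto_subseq fun n => hq n i₀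
  have herr : Tendsto (fun n => (Fintype.card I : ℝ) / (φ n).succ) atTop (nhds 0) :=
    (tendsto_const_div_atTop_nhds_zero_nat _).comp <|
      (tendsto_add_atTop_nat 1).comp hφ.tendsto_atTop
  have hqlim : ∀ i, Tendsto (fun n => q (φ n) i) atTop (nhds p) := fun i =>
    (tendsto_iff_of_dist (squeeze_zero (fun _ => dist_nonneg) (fun n => hclose (φ n) i₀ i)
      herr)).1 hlim
  have hfp : ∀ i, p i ≤ f p i := by
    intro i
    have hflim : Tendsto (fun n => f (q (φ n) i)) atTop (nhds (f p)) :=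
      (hcont p hp).tendsto.comp
        (tendsto_nhdsWithin_iff.2 ⟨hqlim i, .of_forall fun n => hq (φ n) i⟩)
    have := ((tendsto_pi_nhds.1 hflim) i).add herr
    rw [add_zero] at this
    exact le_of_tendsto_of_tendsto' ((tendsto_pi_nhds.1 (hqlim i)) i) this fun n => hle (φ n) i
  have hsum : ∑ i, p i = ∑ i, f p i := hp.2.trans (hf hp).2.symm
  exact ⟨p, hp, funext fun i =>
    ((Finset.sum_eq_sum_iff_of_le fun i _ => hfp i).1 hsum i (Finset.mem_univ i)).symm⟩

/-- Brouwer's fixed point theorem, for bounded maps of the whole space. -/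
theorem exists_fixedPoint_of_bounded {ι : Type*} [Finite ι] {f : (ι → ℝ) → ι → ℝ}
    (hf : Continuous f) (hbdd : Bornology.IsBounded (Set.range f)) : ∃ v, f v = v := by
  cases nonempty_fintype ι
  obtain ⟨R, hR, hfR⟩ := hbdd.exists_pos_norm_le
  have abs_le_R : ∀ v i, |f v i| ≤ R := fun v i => (norm_le_pi_norm (f v) i).trans (hfR _ ⟨v, rfl⟩)
  set N : ℝ := Fintype.card ι + 1
  have hN : 0 < N := by positivity
  let toCube : (Option ι → ℝ) → ι → ℝ := fun p i => 2 * R * N * p (some i) - R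
  let toSimplex : (ι → ℝ) → Option ι → ℝ := fun v o =>
    o.elim (1 - ∑ i, (v i + R) / (2 * R * N)) fun i => (v i + R) / (2 * R * N)
  have mapsTo : ∀ v, (∀ i, |v i| ≤ R) → toSimplex v ∈ stdSimplex ℝ (Option ι) := by
    intro v hv
    have hle : ∀ i, (v i + R) / (2 * R * N) ≤ 1 / N := by
      intro i
      rw [div_le_div_iff₀ (by positivity) hN]
      nlinarith [(abs_le.1 (hv i)).2]
    have hsum : ∑ i, (v i + R) / (2 * R * N) ≤ 1 := by
      refine (Finset.sum_le_sum fun i _ => hle i).trans ?_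
      rw [Finset.sum_const, Finset.card_univ, nsmul_eq_mul, mul_one_div, div_le_one hN]
      exact (lt_add_one _).le
    refine ⟨?_, by simp [toSimplex, Fintype.sum_option]⟩
    rintro (_ | i)
    · simpa [toSimplex] using hsum
    · exact div_nonneg (by linarith [(abs_le.1 (hv i)).1]) (by positivity)
  obtain ⟨p, -, hp⟩ := exists_fixedPoint_stdSimplex (f := fun p => toSimplex (f (toCube p)))
    (fun p _ => mapsTo _ (abs_le_R _)) (Continuous.continuousOn <| by
      refine continuous_pi fun o => ?_
      cases o <;> simp only [toSimplex, toCube, Option.elim] <;> fun_prop)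
  refine ⟨toCube p, funext fun i => ?_⟩
  have := congrFun hp (some i)
  simp only [toSimplex, Option.elim] at this
  rw [div_eq_iff (by positivity)] at this
  simp only [toCube] at this ⊢
  linarith

end Brouwer

section Galerkin

/-- Weak convergence of a sequence in a real inner product space. -/
def WeaklyTendsto {H : Type*} [NormedAddCommGroup H] [InnerProductSpace ℝ H] (z : ℕ → H) (h : H) :
    Prop :=
  ∀ x, Tendsto (fun n => inner ℝ x (z n)) atTop (nhds (inner ℝ x h))

/-- A (nonlinear) map is completely continuous if it sends weakly convergent sequences to
norm-convergent ones. -/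
def IsCompletelyContinuous {H : Type*} [NormedAddCommGroup H] [InnerProductSpace ℝ H]
    (F : H → H) : Prop :=
  ∀ (z : ℕ → H) (h : H), WeaklyTendsto z h → Tendsto (fun n => F (z n)) atTop (nhds (F h))

variable {H : Type*} [NormedAddCommGroup H] [InnerProductSpace ℝ H]

theorem weaklyTendsto_of_tendsto {z : ℕ → H} {h : H} (hz : Tendsto z atTop (nhds h)) :
    WeaklyTendsto z h :=
  fun _ => tendsto_const_nhds.inner hz

theorem WeaklyTendsto.unique {z : ℕ → H} {h h' : H} (hz : WeaklyTendsto z h)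
    (hz' : WeaklyTendsto z h') : h = h' :=
  ext_inner_left ℝ fun x => tendsto_nhds_unique (hz x) (hz' x)

theorem IsCompletelyContinuous.continuous {F : H → H} (hF : IsCompletelyContinuous F) :
    Continuous F :=
  continuous_iff_seqContinuous.2 fun _ _ hz => hF _ _ (weaklyTendsto_of_tendsto hz)

theorem exists_weaklyTendsto_subseq [CompleteSpace H] [TopologicalSpace.SeparableSpace H]
    {z : ℕ → H} (hz : Bornology.IsBounded (Set.range z)) :
    ∃ (h : H) (φ : ℕ → ℕ), StrictMono φ ∧ WeaklyTendsto (z ∘ φ) h := by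
  obtain ⟨C, hC⟩ := isBounded_iff_forall_norm_le.1 hz
  let Λ : ℕ → WeakDual ℝ H := fun n => StrongDual.toWeakDual (InnerProductSpace.toDual ℝ H (z n))
  have hΛ : ∀ n, Λ n ∈ WeakDual.toStrongDual ⁻¹' Metric.closedBall (0 : StrongDual ℝ H) C := by
    intro n
    have : ‖InnerProductSpace.toDual ℝ H (z n)‖ ≤ C := by
      simpa using hC _ (Set.mem_range_self n)
    simpa [Λ] using this
  obtain ⟨L, -, φ, hφ, hL⟩ := WeakDual.isSeqCompact_closedBall ℝ H 0 C hΛ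
  refine ⟨(InnerProductSpace.toDual ℝ H).symm (WeakDual.toStrongDual L), φ, hφ, fun x => ?_⟩
  rw [real_inner_comm, InnerProductSpace.toDual_symm_apply]
  refine (((WeakDual.eval_continuous x).tendsto L).comp hL).congr fun n => ?_
  exact real_inner_comm x (z (φ n))

theorem exists_fixedPoint_of_finiteDimensional {E : Type*} [NormedAddCommGroup E] [NormedSpace ℝ E]
    [FiniteDimensional ℝ E] {f : E → E} (hf : Continuous f)
    (hbdd : Bornology.IsBounded (Set.range f)) : ∃ v, f v = v := by
  let e : E ≃L[ℝ] (Fin (Module.finrank ℝ E) → ℝ) := (Module.finBasis ℝ E).equivFunL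
  obtain ⟨v, hv⟩ := exists_fixedPoint_of_bounded (f := e ∘ f ∘ e.symm) (by fun_prop) <| by
    refine (e.lipschitz.isBounded_image hbdd).subset ?_
    rintro _ ⟨v, rfl⟩
    exact ⟨_, ⟨_, rfl⟩, rfl⟩
  exact ⟨e.symm v, e.injective (by simpa using hv)⟩

theorem exists_mem_starProjection_apply_eq {F : H → H} (hF : Continuous F)
    (hbdd : Bornology.IsBounded (Set.range F)) (U : Submodule ℝ H) [FiniteDimensional ℝ U] :
    ∃ z, U.starProjection (F z) = z := by
  obtain ⟨v, hv⟩ := exists_fixedPoint_of_finiteDimensional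
    (f := fun v : U => U.orthogonalProjectionOnto (F v)) (by fun_prop) <| by
      refine (U.orthogonalProjectionOnto.lipschitz.isBounded_image hbdd).subset ?_
      rintro _ ⟨v, rfl⟩
      exact ⟨_, ⟨_, rfl⟩, rfl⟩
  exact ⟨v, congrArg Subtype.val hv⟩

theorem exists_monotone_finiteDimensional_dense (H : Type*) [NormedAddCommGroup H]
    [InnerProductSpace ℝ H] [TopologicalSpace.SeparableSpace H] :
    ∃ U : ℕ → Submodule ℝ H, Monotone U ∧ (∀ n, FiniteDimensional ℝ (U n)) ∧
      (⨆ n, U n).topologicalClosure = ⊤ := by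
  let d := TopologicalSpace.denseSeq H
  refine ⟨fun n => Submodule.span ℝ (d '' Set.Iic n), fun m n hmn => Submodule.span_mono
    (Set.image_mono (Set.Iic_subset_Iic.2 hmn)),
    fun n => FiniteDimensional.span_of_finite ℝ ((Set.finite_Iic n).image d), ?_⟩
  rw [← Submodule.dense_iff_topologicalClosure_eq_top]
  refine (TopologicalSpace.denseRange_denseSeq H).mono ?_
  rintro _ ⟨n, rfl⟩
  exact Submodule.mem_iSup_of_mem n
    (Submodule.subset_span (Set.mem_image_of_mem d (Set.mem_Iic.2 le_rfl)))

theorem IsCompletelyContinuous.exists_fixedPoint [CompleteSpace H]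
    [TopologicalSpace.SeparableSpace H] {F : H → H} (hF : IsCompletelyContinuous F)
    (hbdd : Bornology.IsBounded (Set.range F)) : ∃ h, F h = h := by
  obtain ⟨U, hU, hfin, hdense⟩ := exists_monotone_finiteDimensional_dense H
  choose z hz using fun n => exists_mem_starProjection_apply_eq hF.continuous hbdd (U n)
  have hcontr : ∀ n x, ‖(U n).starProjection x‖ ≤ ‖x‖ := fun n x =>
    ((U n).starProjection.le_of_opNorm_le (U n).starProjection_norm_le x).trans (one_mul _).le
  have hzb : Bornology.IsBounded (Set.range z) := by
    obtain ⟨C, hC⟩ := isBounded_iff_forall_norm_le.1 hbdd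
    refine isBounded_iff_forall_norm_le.2 ⟨C, ?_⟩
    rintro _ ⟨n, rfl⟩
    rw [← hz n]
    exact (hcontr n _).trans (hC _ ⟨_, rfl⟩)
  obtain ⟨h, φ, hφ, hweak⟩ := exists_weaklyTendsto_subseq hzb
  have hFz : Tendsto (fun n => F (z (φ n))) atTop (nhds (F h)) := hF _ _ hweak
  have hproj : Tendsto (fun n => (U (φ n)).starProjection (F h)) atTop (nhds (F h)) :=
    ((Submodule.starProjection_tendsto_self U hU (F h) hdense.ge).comp hφ.tendsto_atTop)
  have hdiff : Tendsto (fun n => (U (φ n)).starProjection (F (z (φ n)) - F h)) atTop (nhds 0) :=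
    squeeze_zero_norm (fun n => hcontr _ _) (by simpa using (hFz.sub_const (F h)).norm)
  have hstrong : Tendsto (z ∘ φ) atTop (nhds (F h)) := by
    simpa [map_sub, hz, Function.comp_def] using hdiff.add hproj
  exact ⟨h, (weaklyTendsto_of_tendsto hstrong).unique hweak⟩

end Galerkin

section Hammerstein

variable {Ω : Type*} [MeasurableSpace Ω] {ρ : Measure Ω}

theorem isBounded_range_toLp [IsFiniteMeasure ρ] {κ E : Type*} [NormedAddCommGroup E] {p : ENNReal}
    [Fact (1 ≤ p)] {f : κ → Ω → E} (hf : ∀ k, MemLp (f k) p ρ) {C : ℝ} (hC : ∀ k β, ‖f k β‖ ≤ C) :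
    Bornology.IsBounded (Set.range fun k => (hf k).toLp) := by
  refine isBounded_iff_forall_norm_le.2
    ⟨(measureUnivNNReal ρ : ℝ) ^ p.toReal⁻¹ * max C 0, Set.forall_mem_range.2 fun k => ?_⟩
  refine Lp.norm_le_of_ae_bound (le_max_right _ _) ?_
  filter_upwards [(hf k).coeFn_toLp] with β hβ
  exact hβ ▸ (hC k β).trans (le_max_left _ _)

theorem tendsto_toLp_of_tendsto_of_bounded [IsFiniteMeasure ρ] {E : Type*}
    [NormedAddCommGroup E] {p : ENNReal} [Fact (1 ≤ p)] (hp : p ≠ ⊤) {f : ℕ → Ω → E} {g : Ω → E}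
    (hf : ∀ n, MemLp (f n) p ρ) (hg : MemLp g p ρ) {C : ℝ} (hC : ∀ n β, ‖f n β‖ ≤ C)
    (hlim : ∀ β, Tendsto (fun n => f n β) atTop (nhds (g β))) :
    Tendsto (fun n => (hf n).toLp) atTop (nhds hg.toLp) := by
  have hempty : ∀ n, {β | C.toNNReal + 1 ≤ ‖f n β‖₊} = ∅ := fun n =>
    Set.eq_empty_iff_forall_notMem.2 fun β hβ =>
      (lt_add_one C.toNNReal).not_ge
        (hβ.trans (NNReal.le_toNNReal_of_coe_le (x := ‖f n β‖₊) (hC n β)))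
  have hmeas : ∀ n, AEStronglyMeasurable (f n) ρ := fun n => (hf n).aestronglyMeasurable
  rw [Lp.tendsto_Lp_iff_tendsto_eLpNorm'']
  exact tendsto_Lp_finite_of_tendsto_ae Fact.out hp hmeas hg
    (unifIntegrable_of Fact.out hp hmeas fun ε _ =>
      ⟨C.toNNReal + 1, fun n => by simp only [hempty, Set.indicator_empty, eLpNorm_zero', zero_le]⟩)
    (Eventually.of_forall hlim)

theorem memLp_smul_single {J : Type*} [Fintype J] [DecidableEq J] {θ : Ω → ℝ} (hθ : MemLp θ 2 ρ)
    (j : J) : MemLp (fun β => θ β • EuclideanSpace.single j (1 : ℝ)) 2 ρ :=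
  ((ContinuousLinearMap.id ℝ ℝ).smulRight (EuclideanSpace.single j (1 : ℝ))).comp_memLp' hθ

theorem inner_toLp_smul_single {J : Type*} [Fintype J] [DecidableEq J] {θ : Ω → ℝ}
    (hθ : MemLp θ 2 ρ) (j : J) (z : Lp (EuclideanSpace ℝ J) 2 ρ) :
    inner ℝ (memLp_smul_single hθ j).toLp z = ∫ β, θ β * z β j ∂ρ := by
  rw [L2.inner_def]
  refine integral_congr_ae ?_
  filter_upwards [(memLp_smul_single hθ j).coeFn_toLp] with β hβ
  rw [hβ, real_inner_smul_left, EuclideanSpace.inner_single_left]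
  simp

/-- The integral operator with kernel `W`, applied coordinatewise to a vector-valued function. -/
noncomputable def kernelIntegral {ι : Type*} (ρ : Measure Ω) (W : Ω → Ω → ℝ) (f : Ω → ι → ℝ)
    (α : Ω) : ι → ℝ :=
  fun i => ∫ β, W α β * f β i ∂ρ

theorem measurable_kernelIntegral {ι : Type*} [SFinite ρ] {W : Ω → Ω → ℝ}
    (hW : Measurable (Function.uncurry W)) {f : Ω → ι → ℝ} (hf : Measurable f) :
    Measurable (kernelIntegral ρ W f) := by
  refine measurable_pi_lambda _ fun i => ?_
  have hWf : Measurable (Function.uncurry fun α β => W α β * f β i) :=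
    hW.mul ((measurable_pi_apply i).comp (hf.comp measurable_snd))
  exact (hWf.stronglyMeasurable.integral_prod_right (ν := ρ)).measurable

theorem norm_kernelIntegral_le {ι : Type*} [Fintype ι] [IsFiniteMeasure ρ] {W : Ω → Ω → ℝ}
    {C D : ℝ} (hWC : ∀ α β, |W α β| ≤ C) {f : Ω → ι → ℝ} (hf : ∀ β, ‖f β‖ ≤ D) (α : Ω) :
    ‖kernelIntegral ρ W f α‖ ≤ C * D * ρ.real Set.univ := by
  have hC : 0 ≤ C := (abs_nonneg _).trans (hWC α α)
  have hD : 0 ≤ D := (norm_nonneg _).trans (hf α)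
  refine (pi_norm_le_iff_of_nonneg (by positivity)).2 fun i => ?_
  have hbound : ∀ β, ‖W α β * f β i‖ ≤ C * D := fun β => by
    rw [norm_mul]
    exact mul_le_mul (hWC α β) ((norm_le_pi_norm _ i).trans (hf β)) (norm_nonneg _) hC
  exact norm_integral_le_of_norm_le_const (Eventually.of_forall hbound)

theorem WeaklyTendsto.tendsto_kernelIntegral [IsFiniteMeasure ρ] {ι : Type*} [Fintype ι]
    {W : Ω → Ω → ℝ} (hW : Measurable (Function.uncurry W)) {C : ℝ} (hWC : ∀ α β, |W α β| ≤ C)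
    {z : ℕ → Lp (EuclideanSpace ℝ ι) 2 ρ} {h : Lp (EuclideanSpace ℝ ι) 2 ρ}
    (hz : WeaklyTendsto z h) (α : Ω) :
    Tendsto (fun n => kernelIntegral ρ W (fun β => (z n β).ofLp) α) atTop
      (nhds (kernelIntegral ρ W (fun β => (h β).ofLp) α)) := by
  classical
  refine tendsto_pi_nhds.2 fun i => ?_
  have hWα : MemLp (W α) 2 ρ := MemLp.of_bound hW.of_uncurry_left.aestronglyMeasurable C
    (Eventually.of_forall (hWC α))
  simpa only [kernelIntegral, inner_toLp_smul_single hWα] using hz (memLp_smul_single hWα i).toLp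

theorem exists_hammerstein_solution [IsFiniteMeasure ρ] [MeasureTheory.IsSeparable ρ]
    {ι : Type*} [Finite ι] {W : Ω → Ω → ℝ} (hW : Measurable (Function.uncurry W)) {C : ℝ}
    (hWC : ∀ α β, |W α β| ≤ C) {Φ : (ι → ℝ) → ι → ℝ} (hΦ : Continuous Φ)
    (hbdd : Bornology.IsBounded (Set.range Φ)) :
    ∃ y : Ω → ι → ℝ, Measurable y ∧ y = kernelIntegral ρ W (Φ ∘ y) := by
  cases nonempty_fintype ι
  have : Fact ((2 : ENNReal) ≠ ⊤) := ⟨ENNReal.ofNat_ne_top⟩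
  let y : Lp (EuclideanSpace ℝ ι) 2 ρ → Ω → ι → ℝ := fun z =>
    kernelIntegral ρ W fun β => (z β).ofLp
  have hy : ∀ z, Measurable (y z) := fun z => measurable_kernelIntegral hW
    ((WithLp.measurable_ofLp 2 _).comp (Lp.stronglyMeasurable z).measurable)
  have hΦ' : Continuous fun v => (WithLp.toLp 2 (Φ v) : EuclideanSpace ℝ ι) :=
    (PiLp.continuous_toLp 2 _).comp hΦ
  obtain ⟨D, hD⟩ : ∃ D : ℝ, ∀ v, ‖(WithLp.toLp 2 (Φ v) : EuclideanSpace ℝ ι)‖ ≤ D := by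
    obtain ⟨D, hD⟩ := isBounded_iff_forall_norm_le.1
      ((PiLp.lipschitzWith_toLp 2 fun _ : ι => ℝ).isBounded_image hbdd)
    exact ⟨D, fun v => hD _ ⟨_, ⟨v, rfl⟩, rfl⟩⟩
  have hmem : ∀ z, MemLp (fun α => (WithLp.toLp 2 (Φ (y z α)) : EuclideanSpace ℝ ι)) 2 ρ :=
    fun z => MemLp.of_bound (hΦ'.measurable.comp (hy z)).aestronglyMeasurable D
      (Eventually.of_forall fun _ => hD _)
  have hcc : IsCompletelyContinuous fun z => (hmem z).toLp := fun z h hz =>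
    tendsto_toLp_of_tendsto_of_bounded ENNReal.ofNat_ne_top (fun n => hmem (z n)) (hmem h)
      (fun _ _ => hD _) fun α => (hΦ'.tendsto _).comp (hz.tendsto_kernelIntegral hW hWC α)
  obtain ⟨z, hz⟩ := hcc.exists_fixedPoint (isBounded_range_toLp hmem fun _ _ => hD _)
  refine ⟨y z, hy z, funext₂ fun α i => integral_congr_ae ?_⟩
  filter_upwards [(hmem z).coeFn_toLp] with β hβ
  rw [hz] at hβ
  simp only [hβ, Function.comp_apply]

end Hammerstein

section WeakLimit

variable {Ω : Type*} [MeasurableSpace Ω] {ρ : Measure Ω}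

/-- Weak convergence of integrable functions: convergence of the integrals against every bounded
measurable function. -/
structure WeaklyTendstoL1 (ρ : Measure Ω) (f : ℕ → Ω → ℝ) (g : Ω → ℝ) : Prop where
  integrable : ∀ n, Integrable (f n) ρ
  integrable_lim : Integrable g ρ
  tendsto_integral_mul : ∀ θ : Ω → ℝ, Measurable θ → (∃ C, ∀ β, |θ β| ≤ C) →
    Tendsto (fun n => ∫ β, θ β * f n β ∂ρ) atTop (nhds (∫ β, θ β * g β ∂ρ))

theorem exists_weaklyTendstoL1_subseq [IsFiniteMeasure ρ] [MeasureTheory.IsSeparable ρ] {J : Type*}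
    [Fintype J] {f : ℕ → Ω → J → ℝ} (hf : ∀ n, Measurable (f n))
    {C : ℝ} (hC : ∀ n β, ‖f n β‖ ≤ C) :
    ∃ (g : Ω → J → ℝ) (φ : ℕ → ℕ), Measurable g ∧ StrictMono φ ∧
      ∀ j, WeaklyTendstoL1 ρ (fun n β => f (φ n) β j) fun β => g β j := by
  classical
  have : Fact ((2 : ENNReal) ≠ ⊤) := ⟨ENNReal.ofNat_ne_top⟩
  have hfint : ∀ n, Integrable (f n) ρ := fun n =>
    Integrable.of_bound (hf n).aestronglyMeasurable C (Eventually.of_forall (hC n))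
  have hmem : ∀ n, MemLp (fun β => (WithLp.toLp 2 (f n β) : EuclideanSpace ℝ J)) 2 ρ := fun n =>
    (PiLp.continuousLinearEquiv 2 ℝ fun _ : J => ℝ).symm.toContinuousLinearMap.comp_memLp'
      (MemLp.of_bound (hf n).aestronglyMeasurable C (Eventually.of_forall (hC n)))
  obtain ⟨D, hD⟩ : ∃ D : ℝ, ∀ n β, ‖(WithLp.toLp 2 (f n β) : EuclideanSpace ℝ J)‖ ≤ D := by
    obtain ⟨D, hD⟩ := isBounded_iff_forall_norm_le.1 <|
      (PiLp.lipschitzWith_toLp 2 fun _ : J => ℝ).isBounded_image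
        (Metric.isBounded_closedBall (x := (0 : J → ℝ)) (r := C))
    exact ⟨D, fun n β => hD _ ⟨_, mem_closedBall_zero_iff.2 (hC n β), rfl⟩⟩
  obtain ⟨h, φ, hφ, hlim⟩ := exists_weaklyTendsto_subseq (isBounded_range_toLp hmem hD)
  have hhint : Integrable (fun β => (h β).ofLp) ρ :=
    (PiLp.continuousLinearEquiv 2 ℝ fun _ : J => ℝ).toContinuousLinearMap.integrable_comp
      ((Lp.memLp h).integrable one_le_two)
  refine ⟨fun β => (h β).ofLp, φ,
    (WithLp.measurable_ofLp 2 _).comp (Lp.stronglyMeasurable h).measurable, hφ,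
    fun j => ⟨fun n => (hfint _).eval j, hhint.eval j, fun θ hθ ⟨B, hB⟩ => ?_⟩⟩
  have hθL : MemLp θ 2 ρ := MemLp.of_bound hθ.aestronglyMeasurable B (Eventually.of_forall hB)
  have hinner := hlim (memLp_smul_single hθL j).toLp
  simp only [inner_toLp_smul_single hθL, Function.comp_apply] at hinner
  refine hinner.congr fun n => integral_congr_ae ?_
  filter_upwards [(hmem (φ n)).coeFn_toLp] with β hβ
  rw [hβ]

theorem exists_weaklyTendstoL1_subseq_pair [IsFiniteMeasure ρ] [MeasureTheory.IsSeparable ρ]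
    {J K : Type*} [Fintype J] [Fintype K] {f : ℕ → Ω → J → ℝ} {f' : ℕ → Ω → K → ℝ}
    (hf : ∀ n, Measurable (f n)) (hf' : ∀ n, Measurable (f' n)) {C C' : ℝ}
    (hC : ∀ n β, ‖f n β‖ ≤ C) (hC' : ∀ n β, ‖f' n β‖ ≤ C') :
    ∃ (g : Ω → J → ℝ) (g' : Ω → K → ℝ) (φ : ℕ → ℕ), Measurable g ∧ Measurable g' ∧ StrictMono φ ∧
      (∀ j, WeaklyTendstoL1 ρ (fun n β => f (φ n) β j) fun β => g β j) ∧
      ∀ k, WeaklyTendstoL1 ρ (fun n β => f' (φ n) β k) fun β => g' β k := by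
  have hmeas : ∀ n, Measurable fun β => Sum.elim (f n β) (f' n β) := fun n =>
    measurable_pi_iff.2 (Sum.rec (measurable_pi_iff.1 (hf n)) (measurable_pi_iff.1 (hf' n)))
  have hbound : ∀ n β, ‖Sum.elim (f n β) (f' n β)‖ ≤ max C C' := fun n β => by
    refine (pi_norm_le_iff_of_nonneg (le_max_of_le_left ((norm_nonneg _).trans (hC n β)))).2 ?_
    rintro (j | k)
    · exact (norm_le_pi_norm (f n β) j).trans (le_max_of_le_left (hC n β))
    · exact (norm_le_pi_norm (f' n β) k).trans (le_max_of_le_right (hC' n β))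
  obtain ⟨g, φ, hg, hφ, hlim⟩ := exists_weaklyTendstoL1_subseq (ρ := ρ) hmeas hbound
  exact ⟨fun β j => g β (Sum.inl j), fun β k => g β (Sum.inr k), φ, by fun_prop, by fun_prop, hφ,
    fun j => hlim (Sum.inl j), fun k => hlim (Sum.inr k)⟩

theorem weaklyTendstoL1_of_tendsto [IsFiniteMeasure ρ] {f : ℕ → Ω → ℝ} {g : Ω → ℝ}
    (hf : ∀ n, AEStronglyMeasurable (f n) ρ) {C : ℝ} (hC : ∀ n β, |f n β| ≤ C)
    (hlim : ∀ β, Tendsto (fun n => f n β) atTop (nhds (g β))) : WeaklyTendstoL1 ρ f g where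
  integrable n := Integrable.of_bound (hf n) C (Eventually.of_forall (hC n))
  integrable_lim := Integrable.of_bound
    (aestronglyMeasurable_of_tendsto_ae atTop hf (Eventually.of_forall hlim)) C
    (Eventually.of_forall fun β => le_of_tendsto' (hlim β).abs fun n => hC n β)
  tendsto_integral_mul θ hθ := by
    rintro ⟨B, hB⟩
    refine tendsto_integral_of_dominated_convergence (fun _ => B * C)
      (fun n => hθ.aestronglyMeasurable.mul (hf n)) (integrable_const _)
      (fun n => Eventually.of_forall fun β => ?_)
      (Eventually.of_forall fun β => (hlim β).const_mul _)
    rw [norm_mul]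
    exact mul_le_mul (hB β) (hC n β) (norm_nonneg _) ((abs_nonneg _).trans (hB β))

theorem WeaklyTendstoL1.add {f f' : ℕ → Ω → ℝ} {g g' : Ω → ℝ} (hfg : WeaklyTendstoL1 ρ f g)
    (hfg' : WeaklyTendstoL1 ρ f' g') :
    WeaklyTendstoL1 ρ (fun n β => f n β + f' n β) fun β => g β + g' β where
  integrable n := (hfg.integrable n).add (hfg'.integrable n)
  integrable_lim := hfg.integrable_lim.add hfg'.integrable_lim
  tendsto_integral_mul θ hθ := by
    rintro ⟨B, hB⟩
    have hmul : ∀ {h : Ω → ℝ}, Integrable h ρ → Integrable (fun β => θ β * h β) ρ := fun hh =>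
      hh.bdd_mul hθ.aestronglyMeasurable (Eventually.of_forall hB)
    simpa only [mul_add, integral_add (hmul (hfg.integrable _)) (hmul (hfg'.integrable _)),
      integral_add (hmul hfg.integrable_lim) (hmul hfg'.integrable_lim)] using
      (hfg.tendsto_integral_mul θ hθ ⟨B, hB⟩).add (hfg'.tendsto_integral_mul θ hθ ⟨B, hB⟩)

theorem WeaklyTendstoL1.sum [IsFiniteMeasure ρ] {κ : Type*} (s : Finset κ) {f : κ → ℕ → Ω → ℝ}
    {g : κ → Ω → ℝ} (hfg : ∀ k, WeaklyTendstoL1 ρ (f k) (g k)) :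
    WeaklyTendstoL1 ρ (fun n β => ∑ k ∈ s, f k n β) fun β => ∑ k ∈ s, g k β := by
  classical
  induction s using Finset.induction_on with
  | empty =>
    simpa using weaklyTendstoL1_of_tendsto (ρ := ρ) (f := fun _ _ => 0) (C := 0)
      (fun _ => aestronglyMeasurable_const) (by simp) fun _ => tendsto_const_nhds
  | insert k s hk ih => simpa only [Finset.sum_insert hk] using (hfg k).add ih

theorem WeaklyTendstoL1.mul [IsFiniteMeasure ρ] {f : ℕ → Ω → ℝ} {g : Ω → ℝ}
    (hfg : WeaklyTendstoL1 ρ f g) {C : ℝ} (hC : ∀ n β, |f n β| ≤ C)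
    {θ : ℕ → Ω → ℝ} {η : Ω → ℝ} (hθ : ∀ n, Measurable (θ n)) {D : ℝ} (hD : ∀ n β, |θ n β| ≤ D)
    (hlim : ∀ β, Tendsto (fun n => θ n β) atTop (nhds (η β))) :
    WeaklyTendstoL1 ρ (fun n β => f n β * θ n β) fun β => g β * η β := by
  have hη : Measurable η := measurable_of_tendsto_metrizable hθ (tendsto_pi_nhds.2 hlim)
  have hηD : ∀ β, |η β| ≤ D := fun β => le_of_tendsto' (hlim β).abs fun n => hD n β
  have hfη : WeaklyTendstoL1 ρ (fun n β => f n β * η β) fun β => g β * η β :=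
    ⟨fun n => (hfg.integrable n).mul_bdd hη.aestronglyMeasurable (Eventually.of_forall hηD),
      hfg.integrable_lim.mul_bdd hη.aestronglyMeasurable (Eventually.of_forall hηD),
      fun ξ hξ ⟨B, hB⟩ => by
        simpa only [Pi.mul_apply, mul_assoc, mul_comm (η _)] using
          hfg.tendsto_integral_mul (ξ * η) (hξ.mul hη) ⟨B * D, fun β => by
            rw [Pi.mul_apply, abs_mul]
            exact mul_le_mul (hB β) (hηD β) (abs_nonneg _) ((abs_nonneg _).trans (hB β))⟩⟩
  have hzero : WeaklyTendstoL1 ρ (fun n β => f n β * (θ n β - η β)) fun _ => 0 := by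
    refine weaklyTendstoL1_of_tendsto (C := C * (D + D))
      (fun n => (hfg.integrable n).aestronglyMeasurable.mul ((hθ n).sub hη).aestronglyMeasurable)
      (fun n β => ?_) fun β => ?_
    · rw [abs_mul]
      exact mul_le_mul (hC n β) ((abs_sub _ _).trans (add_le_add (hD n β) (hηD β)))
        (abs_nonneg _) ((abs_nonneg _).trans (hC n β))
    · exact isBoundedUnder_le_mul_tendsto_zero (isBoundedUnder_of ⟨C, fun n => hC n β⟩)
        (sub_self (η β) ▸ (hlim β).sub_const (η β))
  simpa only [mul_sub, add_sub_cancel, add_zero] using hfη.add hzero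

theorem WeaklyTendstoL1.ae_le [IsFiniteMeasure ρ] {f f' : ℕ → Ω → ℝ} {g g' : Ω → ℝ}
    (hfg : WeaklyTendstoL1 ρ f g) (hfg' : WeaklyTendstoL1 ρ f' g')
    (hle : ∀ n β, f n β ≤ f' n β) : g ≤ᵐ[ρ] g' := by
  refine ae_le_of_forall_setIntegral_le hfg.integrable_lim hfg'.integrable_lim fun s hs _ => ?_
  have htest : ∀ {h : ℕ → Ω → ℝ} {k : Ω → ℝ}, WeaklyTendstoL1 ρ h k →
      Tendsto (fun n => ∫ β in s, h n β ∂ρ) atTop (nhds (∫ β in s, k β ∂ρ)) := fun {h k} hhk => by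
    have hind : ∀ l : Ω → ℝ, ∫ β, s.indicator 1 β * l β ∂ρ = ∫ β in s, l β ∂ρ := fun l => by
      rw [← integral_indicator hs]
      exact integral_congr_ae (Eventually.of_forall fun β => by
        by_cases hβ : β ∈ s <;> simp [hβ])
    simpa only [hind] using hhk.tendsto_integral_mul (s.indicator 1)
      (measurable_one.indicator hs) ⟨1, fun β => by by_cases hβ : β ∈ s <;> simp [hβ]⟩
  exact le_of_tendsto_of_tendsto' (htest hfg) (htest hfg') fun n =>
    setIntegral_mono (hfg.integrable n).integrableOn (hfg'.integrable n).integrableOn (hle n)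

theorem WeaklyTendstoL1.ae_eq [IsFiniteMeasure ρ] {f : ℕ → Ω → ℝ} {g g' : Ω → ℝ}
    (hfg : WeaklyTendstoL1 ρ f g) (hfg' : WeaklyTendstoL1 ρ f g') : g =ᵐ[ρ] g' :=
  (hfg.ae_le hfg' fun _ _ => le_rfl).antisymm (hfg'.ae_le hfg fun _ _ => le_rfl)

end WeakLimit

section NearArgmax

variable {A : Type*} [Fintype A]

/-- The largest payoff offered by a payoff vector. -/
noncomputable def maxPayoff [Nonempty A] (u : A → ℝ) : ℝ :=
  Finset.univ.sup' Finset.univ_nonempty u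

theorem le_maxPayoff [Nonempty A] (u : A → ℝ) (a : A) : u a ≤ maxPayoff u :=
  Finset.le_sup' u (Finset.mem_univ a)

theorem exists_eq_maxPayoff [Nonempty A] (u : A → ℝ) : ∃ a, u a = maxPayoff u := by
  obtain ⟨a, -, ha⟩ := Finset.exists_mem_eq_sup' Finset.univ_nonempty u
  exact ⟨a, ha.symm⟩

theorem continuous_maxPayoff [Nonempty A] : Continuous (maxPayoff : (A → ℝ) → ℝ) :=
  Continuous.finset_sup'_apply _ fun a _ => continuous_apply a

theorem sum_mul_le_maxPayoff [Nonempty A] {q : A → ℝ} (hq : q ∈ stdSimplex ℝ A) (u : A → ℝ) :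
    ∑ a, q a * u a ≤ maxPayoff u := by
  calc ∑ a, q a * u a ≤ ∑ a, q a * maxPayoff u :=
        Finset.sum_le_sum fun a _ => mul_le_mul_of_nonneg_left (le_maxPayoff u a) (hq.1 a)
    _ = maxPayoff u := by rw [← Finset.sum_mul, hq.2, one_mul]

/-- A mixed action is `ε`-optimal for a payoff vector if it is a probability vector whose expected
payoff is within `ε` of the largest payoff. -/
def IsNearOptimal [Nonempty A] (ε : ℝ) (u q : A → ℝ) : Prop :=
  q ∈ stdSimplex ℝ A ∧ maxPayoff u - ε ≤ ∑ a, q a * u a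

/-- The mixed action proportional to a weight vector. -/
noncomputable def normalize (w : A → ℝ) : A → ℝ :=
  fun a => w a / ∑ b, w b

theorem normalize_mem_stdSimplex {w : A → ℝ} (hw : ∀ a, 0 ≤ w a) (hsum : ∑ a, w a ≠ 0) :
    normalize w ∈ stdSimplex ℝ A :=
  ⟨fun a => div_nonneg (hw a) (Finset.sum_nonneg fun b _ => hw b), by
    simp only [normalize, ← Finset.sum_div, div_self hsum]⟩

theorem isNearOptimal_normalize [Nonempty A] {ε : ℝ} {u w : A → ℝ} (hw : ∀ a, 0 ≤ w a)
    (hsum : ∑ a, w a ≠ 0) (hsupp : ∀ a, w a ≠ 0 → maxPayoff u - ε ≤ u a) :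
    IsNearOptimal ε u (normalize w) := by
  have hmem := normalize_mem_stdSimplex hw hsum
  refine ⟨hmem, ?_⟩
  calc maxPayoff u - ε = ∑ a, normalize w a * (maxPayoff u - ε) := by
        rw [← Finset.sum_mul, hmem.2, one_mul]
    _ ≤ ∑ a, normalize w a * u a := Finset.sum_le_sum fun a _ => by
        by_cases ha : w a = 0
        · simp [normalize, ha]
        · exact mul_le_mul_of_nonneg_left (hsupp a ha) (hmem.1 a)

variable [Nonempty A]

/-- A continuous selection of `ε`-optimal mixed actions: the weight of an action decreases linearly
in its regret and vanishes when the regret reaches `ε`. -/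
noncomputable def nearArgmax (ε : ℝ) (u : A → ℝ) : A → ℝ :=
  normalize fun a => max 0 (ε - (maxPayoff u - u a))

theorem sum_nearArgmax_weights_pos {ε : ℝ} (hε : 0 < ε) (u : A → ℝ) :
    0 < ∑ a, max 0 (ε - (maxPayoff u - u a)) := by
  obtain ⟨a, ha⟩ := exists_eq_maxPayoff u
  exact Finset.sum_pos' (fun _ _ => le_max_left _ _) ⟨a, Finset.mem_univ a, by simp [ha, hε]⟩

theorem isNearOptimal_nearArgmax {ε : ℝ} (hε : 0 < ε) (u : A → ℝ) :
    IsNearOptimal ε u (nearArgmax ε u) :=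
  isNearOptimal_normalize (fun _ => le_max_left _ _)
    (sum_nearArgmax_weights_pos hε u).ne' fun a ha => by
    contrapose! ha
    exact max_eq_left (by linarith)

theorem continuous_nearArgmax {ε : ℝ} (hε : 0 < ε) :
    Continuous (nearArgmax ε : (A → ℝ) → A → ℝ) := by
  have hw : ∀ a, Continuous fun u : A → ℝ => max 0 (ε - (maxPayoff u - u a)) := fun a =>
    continuous_const.max (continuous_const.sub (continuous_maxPayoff.sub (continuous_apply a)))
  exact continuous_pi fun a => (hw a).div (continuous_finsetSum _ fun b _ => hw b)
    fun u => (sum_nearArgmax_weights_pos hε u).ne'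

open Classical in
/-- The uniform distribution on the optimal actions. -/
noncomputable def uniformArgmax (u : A → ℝ) : A → ℝ :=
  normalize fun a => if maxPayoff u ≤ u a then 1 else 0

theorem isNearOptimal_uniformArgmax (u : A → ℝ) : IsNearOptimal 0 u (uniformArgmax u) := by
  refine isNearOptimal_normalize (fun a => by split_ifs <;> simp) ?_ fun a ha => ?_
  · obtain ⟨a, ha⟩ := exists_eq_maxPayoff u
    exact (Finset.sum_pos' (fun b _ => by split_ifs <;> simp)
      ⟨a, Finset.mem_univ a, by simp [ha.ge]⟩).ne'
  · by_contra hlt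
    exact ha (if_neg (by simpa using hlt))

theorem measurable_uniformArgmax : Measurable (uniformArgmax : (A → ℝ) → A → ℝ) := by
  have hw : ∀ a, Measurable fun u : A → ℝ => if maxPayoff u ≤ u a then (1 : ℝ) else 0 := fun a =>
    Measurable.ite (measurableSet_le continuous_maxPayoff.measurable (measurable_pi_apply a))
      measurable_const measurable_const
  exact measurable_pi_lambda _ fun a => (hw a).div (Finset.measurable_sum _ fun b _ => hw b)

theorem isClosed_setOf_isNearOptimal (ε : ℝ) :
    IsClosed {p : (A → ℝ) × (A → ℝ) | IsNearOptimal ε p.1 p.2} := by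
  have hmax : Continuous fun p : (A → ℝ) × (A → ℝ) => maxPayoff p.1 - ε :=
    (continuous_maxPayoff.comp continuous_fst).sub continuous_const
  have hpay : Continuous fun p : (A → ℝ) × (A → ℝ) => ∑ a, p.2 a * p.1 a := by fun_prop
  exact ((isClosed_stdSimplex ℝ A).preimage continuous_snd).inter (isClosed_le hmax hpay)

end NearArgmax

section StdSimplex

theorem norm_le_one_of_mem_stdSimplex {A : Type*} [Fintype A] {q : A → ℝ}
    (hq : q ∈ stdSimplex ℝ A) : ‖q‖ ≤ 1 :=
  (pi_norm_le_iff_of_nonneg zero_le_one).2 fun a => by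
    simpa [abs_of_nonneg (hq.1 a)] using (mem_Icc_of_mem_stdSimplex hq a).2

theorem norm_sum_smul_le {A E : Type*} [Fintype A] [SeminormedAddCommGroup E] [NormedSpace ℝ E]
    {q : A → ℝ} (hq : q ∈ stdSimplex ℝ A) {w : A → E} {D : ℝ} (hw : ∀ a, ‖w a‖ ≤ D) :
    ‖∑ a, q a • w a‖ ≤ D :=
  mem_closedBall_zero_iff.1 <| (convex_closedBall (0 : E) D).sum_mem (fun a _ => hq.1 a) hq.2
    fun a _ => mem_closedBall_zero_iff.2 (hw a)

end StdSimplex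

section GraphonGame

/-- An approximate equilibrium of the static graphon game in which the players `α : Ω` choose mixed
actions `q α` over `A`, a player facing the field `v : ι → ℝ` and playing `a` contributes `φ v a` to
the fields of the others, and receives the payoff `u v a`. The field `y α` felt by player `α` is the
`W α`-weighted integral of the expected contributions, and `q α` is `ε`-optimal against `y α`. -/
structure IsGraphonGameEquilibrium {Ω A ι : Type*} [MeasurableSpace Ω] [Fintype A] [Nonempty A]
    (ρ : Measure Ω) (W : Ω → Ω → ℝ) (φ : (ι → ℝ) → A → ι → ℝ) (u : (ι → ℝ) → A → ℝ) (ε : ℝ)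
    (q : Ω → A → ℝ) (y : Ω → ι → ℝ) : Prop where
  measurable_action : Measurable q
  measurable_field : Measurable y
  field_eq : y = kernelIntegral ρ W fun β => ∑ a, q β a • φ (y β) a
  isNearOptimal : ∀ β, IsNearOptimal ε (u (y β)) (q β)

variable {Ω A ι : Type*} [MeasurableSpace Ω] [Fintype A] [Nonempty A] {ρ : Measure Ω}
  {W : Ω → Ω → ℝ} {φ : (ι → ℝ) → A → ι → ℝ} {u : (ι → ℝ) → A → ℝ}

theorem exists_isGraphonGameEquilibrium_of_pos [IsFiniteMeasure ρ] [MeasureTheory.IsSeparable ρ]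
    [Fintype ι] (hW : Measurable (Function.uncurry W)) {C : ℝ} (hWC : ∀ α β, |W α β| ≤ C)
    (hφ : Continuous φ) {D : ℝ} (hD : ∀ v a, ‖φ v a‖ ≤ D) (hu : Continuous u) {ε : ℝ} (hε : 0 < ε) :
    ∃ q y, IsGraphonGameEquilibrium ρ W φ u ε q y := by
  have hq : Continuous fun v => nearArgmax ε (u v) := (continuous_nearArgmax hε).comp hu
  obtain ⟨y, hy, hyeq⟩ := exists_hammerstein_solution (ρ := ρ) hW hWC
    (Φ := fun v => ∑ a, nearArgmax ε (u v) a • φ v a)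
    (continuous_finsetSum _ fun a _ =>
      ((continuous_apply a).comp hq).smul ((continuous_apply a).comp hφ))
    (isBounded_iff_forall_norm_le.2 ⟨D, Set.forall_mem_range.2 fun v =>
      norm_sum_smul_le (isNearOptimal_nearArgmax hε (u v)).1 (hD v)⟩)
  exact ⟨_, y, hq.measurable.comp hy, hy, hyeq, fun β => isNearOptimal_nearArgmax hε _⟩

end GraphonGame

section WeakLimitOfEquilibria

variable {Ω A ι : Type*} [MeasurableSpace Ω] {ρ : Measure Ω} [IsFiniteMeasure ρ] [Fintype A]
  {q : ℕ → Ω → A → ℝ} {q' : Ω → A → ℝ} {y : ℕ → Ω → ι → ℝ} {y' : Ω → ι → ℝ}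

theorem ae_mem_stdSimplex_of_weaklyTendstoL1
    (hqlim : ∀ a, WeaklyTendstoL1 ρ (fun n β => q n β a) fun β => q' β a)
    (hq : ∀ n β, q n β ∈ stdSimplex ℝ A) : ∀ᵐ β ∂ρ, q' β ∈ stdSimplex ℝ A := by
  have hconst : ∀ c : ℝ, WeaklyTendstoL1 ρ (fun _ _ => c) fun _ => c := fun c =>
    weaklyTendstoL1_of_tendsto (C := |c|) (fun _ => aestronglyMeasurable_const)
      (fun _ _ => le_rfl) fun _ => tendsto_const_nhds
  have hsum : WeaklyTendstoL1 ρ (fun _ _ => 1) fun β => ∑ a, q' β a := by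
    simpa only [(hq _ _).2] using WeaklyTendstoL1.sum Finset.univ hqlim
  have hnonneg : ∀ᵐ β ∂ρ, ∀ a, 0 ≤ q' β a :=
    ae_all_iff.2 fun a => (hconst 0).ae_le (hqlim a) fun n β => (hq n β).1 a
  filter_upwards [hnonneg, hsum.ae_le (hconst 1) fun _ _ => le_rfl,
    (hconst 1).ae_le hsum fun _ _ => le_rfl] with β h₀ h₁ h₂
  exact ⟨h₀, le_antisymm h₁ h₂⟩

variable [Fintype ι] (hy : ∀ n, Measurable (y n)) {R : ℝ} (hR : ∀ n β, ‖y n β‖ ≤ R)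
  (hylim : ∀ β, Tendsto (fun n => y n β) atTop (nhds (y' β)))

include hy hR hylim

theorem weaklyTendstoL1_comp {ψ : (ι → ℝ) → ℝ} (hψ : Continuous ψ) :
    WeaklyTendstoL1 ρ (fun n β => ψ (y n β)) fun β => ψ (y' β) := by
  obtain ⟨M, hM⟩ := (isCompact_closedBall (0 : ι → ℝ) R).exists_bound_of_continuousOn
    hψ.continuousOn
  exact weaklyTendstoL1_of_tendsto (fun n => (hψ.measurable.comp (hy n)).aestronglyMeasurable)
    (fun n β => hM _ (mem_closedBall_zero_iff.2 (hR n β))) fun β => (hψ.tendsto _).comp (hylim β)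

theorem weaklyTendstoL1_sum_mul_comp
    (hqlim : ∀ a, WeaklyTendstoL1 ρ (fun n β => q n β a) fun β => q' β a)
    (hq : ∀ n β, q n β ∈ stdSimplex ℝ A) {ψ : (ι → ℝ) → A → ℝ} (hψ : Continuous ψ) :
    WeaklyTendstoL1 ρ (fun n β => ∑ a, q n β a * ψ (y n β) a)
      fun β => ∑ a, q' β a * ψ (y' β) a := by
  refine WeaklyTendstoL1.sum _ fun a => ?_
  have hψa : Continuous fun v => ψ v a := (continuous_apply a).comp hψ
  obtain ⟨M, hM⟩ := (isCompact_closedBall (0 : ι → ℝ) R).exists_bound_of_continuousOn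
    hψa.continuousOn
  refine (hqlim a).mul (C := 1) (fun n β => ?_) (fun n => hψa.measurable.comp (hy n))
    (fun n β => hM _ (mem_closedBall_zero_iff.2 (hR n β))) fun β => (hψa.tendsto _).comp (hylim β)
  exact (norm_le_pi_norm _ a).trans (norm_le_one_of_mem_stdSimplex (hq n β))

theorem ae_isNearOptimal_of_weaklyTendstoL1 [Nonempty A]
    (hqlim : ∀ a, WeaklyTendstoL1 ρ (fun n β => q n β a) fun β => q' β a)
    {u : (ι → ℝ) → A → ℝ} (hu : Continuous u) {ε : ℕ → ℝ} (hε : Tendsto ε atTop (nhds 0))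
    (hopt : ∀ n β, IsNearOptimal (ε n) (u (y n β)) (q n β)) :
    ∀ᵐ β ∂ρ, IsNearOptimal 0 (u (y' β)) (q' β) := by
  have hq : ∀ n β, q n β ∈ stdSimplex ℝ A := fun n β => (hopt n β).1
  obtain ⟨B, hB⟩ := isBounded_iff_forall_norm_le.1 (Metric.isBounded_range_of_tendsto ε hε)
  have hmax : WeaklyTendstoL1 ρ (fun n β => maxPayoff (u (y n β)) + -ε n)
      fun β => maxPayoff (u (y' β)) + -0 :=
    (weaklyTendstoL1_comp hy hR hylim (continuous_maxPayoff.comp hu)).add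
      (weaklyTendstoL1_of_tendsto (C := B) (fun _ => aestronglyMeasurable_const)
        (fun n _ => by simpa using hB _ ⟨n, rfl⟩) fun _ => hε.neg)
  filter_upwards [ae_mem_stdSimplex_of_weaklyTendstoL1 hqlim hq,
    hmax.ae_le (weaklyTendstoL1_sum_mul_comp hy hR hylim hqlim hq hu)
      fun n β => (hopt n β).2] with β hβq hβ
  exact ⟨hβq, hβ⟩

end WeakLimitOfEquilibria

section GraphonGameExistence

variable {Ω A ι : Type*} [MeasurableSpace Ω] [Fintype A] [Nonempty A] {ρ : Measure Ω}
  {W : Ω → Ω → ℝ} {φ : (ι → ℝ) → A → ι → ℝ} {u : (ι → ℝ) → A → ℝ}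

theorem exists_ae_isNearOptimal [IsFiniteMeasure ρ] [MeasureTheory.IsSeparable ρ]
    [Fintype ι] (hW : Measurable (Function.uncurry W)) {C : ℝ} (hWC : ∀ α β, |W α β| ≤ C)
    (hφ : Continuous φ) {D : ℝ} (hD : ∀ v a, ‖φ v a‖ ≤ D) (hu : Continuous u) :
    ∃ (q : Ω → A → ℝ) (y : Ω → ι → ℝ), Measurable q ∧ Measurable y ∧
      (y = kernelIntegral ρ W fun β => ∑ a, q β a • φ (y β) a) ∧
      ∀ᵐ β ∂ρ, IsNearOptimal 0 (u (y β)) (q β) := by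
  choose q y hqy using fun n : ℕ =>
    exists_isGraphonGameEquilibrium_of_pos (ρ := ρ) hW hWC hφ hD hu
      (Nat.one_div_pos_of_nat (n := n))
  have hq : ∀ n β, q n β ∈ stdSimplex ℝ A := fun n β => ((hqy n).isNearOptimal β).1
  have hq1 : ∀ n β, ‖q n β‖ ≤ 1 := fun n β => norm_le_one_of_mem_stdSimplex (hq n β)
  let m : ℕ → Ω → ι → ℝ := fun n β => ∑ a, q n β a • φ (y n β) a
  have hmD : ∀ n β, ‖m n β‖ ≤ D := fun n β => norm_sum_smul_le (hq n β) (hD (y n β))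
  have hmmeas : ∀ n, Measurable (m n) := fun n => Finset.measurable_sum _ fun a _ =>
    ((measurable_pi_apply a).comp (hqy n).measurable_action).smul
      (((continuous_apply a).comp hφ).measurable.comp (hqy n).measurable_field)
  obtain ⟨q', m', s, hq', hm', hs, hqlim, hmlim⟩ := exists_weaklyTendstoL1_subseq_pair (ρ := ρ)
    (fun n => (hqy n).measurable_action) hmmeas hq1 hmD
  let y' : Ω → ι → ℝ := kernelIntegral ρ W m'
  have hylim : ∀ α, Tendsto (fun n => y (s n) α) atTop (nhds (y' α)) := fun α =>
    tendsto_pi_nhds.2 fun i => by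
      rw [funext fun n => congrFun₂ (hqy (s n)).field_eq α i]
      exact (hmlim i).tendsto_integral_mul (W α) hW.of_uncurry_left ⟨C, hWC α⟩
  have hyR : ∀ n β, ‖y (s n) β‖ ≤ C * D * ρ.real Set.univ := fun n β => by
    rw [(hqy (s n)).field_eq]
    exact norm_kernelIntegral_le hWC (hmD (s n)) β
  have hymeas : ∀ n, Measurable (y (s n)) := fun n => (hqy (s n)).measurable_field
  have hm'eq : ∀ᵐ β ∂ρ, ∀ i, m' β i = ∑ a, q' β a * φ (y' β) a i := ae_all_iff.2 fun i => by
    refine (hmlim i).ae_eq ?_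
    simpa [m] using weaklyTendstoL1_sum_mul_comp hymeas hyR hylim hqlim (fun n => hq (s n))
      (ψ := fun v a => φ v a i) (by fun_prop)
  refine ⟨q', y', hq', measurable_kernelIntegral hW hm', ?_,
    ae_isNearOptimal_of_weaklyTendstoL1 hymeas hyR hylim hqlim hu
      (tendsto_one_div_add_atTop_nhds_zero_nat.comp hs.tendsto_atTop)
      fun n => (hqy (s n)).isNearOptimal⟩
  refine funext₂ fun α i => integral_congr_ae ?_
  filter_upwards [hm'eq] with β hβ
  simp [hβ]

theorem exists_isGraphonGameEquilibrium [IsFiniteMeasure ρ] [MeasureTheory.IsSeparable ρ]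
    [Fintype ι] (hW : Measurable (Function.uncurry W)) {C : ℝ} (hWC : ∀ α β, |W α β| ≤ C)
    (hφ : Continuous φ) {D : ℝ} (hD : ∀ v a, ‖φ v a‖ ≤ D) (hu : Continuous u) :
    ∃ q y, IsGraphonGameEquilibrium ρ W φ u 0 q y := by
  classical
  obtain ⟨q, y, hq, hy, hyeq, hopt⟩ := exists_ae_isNearOptimal (ρ := ρ) hW hWC hφ hD hu
  let S : Set Ω := {β | IsNearOptimal 0 (u (y β)) (q β)}
  have hS : MeasurableSet S := (isClosed_setOf_isNearOptimal 0).measurableSet.preimage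
    ((hu.measurable.comp hy).prodMk hq)
  refine ⟨S.piecewise q fun β => uniformArgmax (u (y β)), y,
    hq.piecewise hS (measurable_uniformArgmax.comp (hu.measurable.comp hy)), hy, ?_, fun β => ?_⟩
  · conv_lhs => rw [hyeq]
    refine funext₂ fun α i => integral_congr_ae ?_
    filter_upwards [hopt] with β hβ
    rw [S.piecewise_eq_of_mem _ _ (hβ : β ∈ S)]
  · by_cases hβ : β ∈ S
    · rw [S.piecewise_eq_of_mem _ _ hβ]
      exact hβ
    · rw [S.piecewise_eq_of_notMem _ _ hβ]
      exact isNearOptimal_uniformArgmax _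

end GraphonGameExistence

section SubProb

variable [Fintype 𝒳]

/-- A continuous retraction of `𝒳 → ℝ` onto `subProb 𝒳`: truncate at zero, then rescale if the mass
exceeds one. -/
noncomputable def subProbRetract (ν : 𝒳 → ℝ) : 𝒳 → ℝ :=
  fun x => max (ν x) 0 / max 1 (∑ y, max (ν y) 0)

theorem subProbRetract_mem (ν : 𝒳 → ℝ) : subProbRetract ν ∈ subProb 𝒳 := by
  have hpos : 0 < max 1 (∑ y, max (ν y) 0) := lt_max_of_lt_left one_pos
  refine ⟨fun x => div_nonneg (le_max_right _ _) hpos.le, ?_⟩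
  simp only [subProbRetract, ← Finset.sum_div, div_le_one hpos, le_max_right]

theorem subProbRetract_eq_self {ν : 𝒳 → ℝ} (hν : ν ∈ subProb 𝒳) : subProbRetract ν = ν := by
  funext x
  simp only [subProbRetract, max_eq_left (hν.1 _), max_eq_left hν.2, div_one]

theorem continuous_subProbRetract : Continuous (subProbRetract : (𝒳 → ℝ) → 𝒳 → ℝ) :=
  continuous_pi fun x => Continuous.div (by fun_prop) (by fun_prop) fun _ =>
    (lt_max_of_lt_left one_pos).ne'

theorem measurable_comp_of_continuousOn_subProb {Ω E : Type*} [MeasurableSpace Ω]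
    [TopologicalSpace E] [MeasurableSpace E] [BorelSpace E] {f : (𝒳 → ℝ) → E}
    (hf : ContinuousOn f (subProb 𝒳)) {ν : Ω → 𝒳 → ℝ} (hν : Measurable ν)
    (hmem : ∀ ω, ν ω ∈ subProb 𝒳) : Measurable fun ω => f (ν ω) := by
  have hcomp : Continuous fun ν' => f (subProbRetract ν') :=
    hf.comp_continuous continuous_subProbRetract subProbRetract_mem
  simpa only [Function.comp_def, subProbRetract_eq_self (hmem _)] using hcomp.measurable.comp hν

theorem continuousOn_of_abs_sub_le_l1dist {s : Set (𝒳 → ℝ)} {f : (𝒳 → ℝ) → ℝ} {L : ℝ}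
    (hf : ∀ ν ∈ s, ∀ ν' ∈ s, |f ν - f ν'| ≤ L * l1dist ν ν') : ContinuousOn f s := by
  intro ν hν
  have hlim : Tendsto (fun ν' => L * l1dist ν' ν) (nhds ν) (nhds 0) := by
    have hcont : Continuous fun ν' => L * l1dist ν' ν := by
      unfold l1dist
      fun_prop
    simpa [l1dist] using hcont.tendsto ν
  refine tendsto_iff_dist_tendsto_zero.2 <|
    squeeze_zero' (Eventually.of_forall fun _ => dist_nonneg) ?_ (hlim.mono_left nhdsWithin_le_nhds)
  filter_upwards [self_mem_nhdsWithin] with ν' hν'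
  exact hf ν' hν' ν hν

theorem KernelLipschitz.continuousOn [Fintype 𝒰] {P : 𝒳 → 𝒰 → (𝒳 → ℝ) → 𝒳 → ℝ} {L : ℝ}
    (hP : KernelLipschitz P L) (x : 𝒳) (u : 𝒰) : ContinuousOn (P x u) (subProb 𝒳) :=
  continuousOn_pi.2 fun x' => continuousOn_of_abs_sub_le_l1dist fun ν hν ν' hν' =>
    (Finset.single_le_sum (f := fun y => |P x u ν y - P x u ν' y|) (fun _ _ => abs_nonneg _)
      (Finset.mem_univ x')).trans (hP x u ν ν' hν hν')

theorem RewardLipschitz.continuousOn [Fintype 𝒰] {r : 𝒳 → 𝒰 → (𝒳 → ℝ) → ℝ} {L : ℝ}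
    (hr : RewardLipschitz r L) (x : 𝒳) (u : 𝒰) : ContinuousOn (r x u) (subProb 𝒳) :=
  continuousOn_of_abs_sub_le_l1dist fun ν hν ν' hν' => hr x u ν ν' hν hν'

end SubProb

section StateLaw

variable [Fintype 𝒳] [Fintype 𝒰] {P : 𝒳 → 𝒰 → (𝒳 → ℝ) → 𝒳 → ℝ} {r : 𝒳 → 𝒰 → (𝒳 → ℝ) → ℝ}
  {μ0 : 𝒳 → ℝ}

theorem IsKernel.sum_mul_sum_mul_mem_simplex (hP : IsKernel P) {ν m : 𝒳 → ℝ} {p : 𝒳 → 𝒰 → ℝ}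
    (hν : ν ∈ subProb 𝒳) (hm : m ∈ simplex 𝒳) (hp : ∀ x, p x ∈ simplex 𝒰) :
    (fun x' => ∑ x, m x * ∑ u, p x u * P x u ν x') ∈ simplex 𝒳 := by
  have hstep : ∀ x, ∑ u, p x u • P x u ν ∈ stdSimplex ℝ 𝒳 := fun x =>
    (convex_stdSimplex ℝ 𝒳).sum_mem (fun u _ => (hp x).1 u) (hp x).2 fun u _ => hP x u ν hν
  have hmix : ∑ x, m x • ∑ u, p x u • P x u ν ∈ stdSimplex ℝ 𝒳 :=
    (convex_stdSimplex ℝ 𝒳).sum_mem (fun x _ => hm.1 x) hm.2 fun x _ => hstep x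
  have heq : (fun x' => ∑ x, m x * ∑ u, p x u * P x u ν x') =
      ∑ x, m x • ∑ u, p x u • P x u ν := by
    funext x'
    simp
  exact heq ▸ hmix

theorem stateLaw_mem_simplex (hP : IsKernel P) (hμ0 : μ0 ∈ simplex 𝒳) {G : ℕ → 𝒳 → ℝ}
    (hG : ∀ t, G t ∈ subProb 𝒳) {π : ℕ → 𝒳 → 𝒰 → ℝ} (hπ : IsPolicy π) (t : ℕ) :
    stateLaw P μ0 G π t ∈ simplex 𝒳 := by
  induction t with
  | zero => exact hμ0
  | succ t ih => exact hP.sum_mul_sum_mul_mem_simplex (hG t) ih (hπ t)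

theorem stateLaw_congr {G G' : ℕ → 𝒳 → ℝ} {π π' : ℕ → 𝒳 → 𝒰 → ℝ} {t : ℕ}
    (hG : ∀ s < t, G s = G' s) (hπ : ∀ s < t, π s = π' s) :
    stateLaw P μ0 G π t = stateLaw P μ0 G' π' t := by
  induction t with
  | zero => rfl
  | succ t ih =>
    funext x'
    simp only [stateLaw, hG t t.lt_succ_self, hπ t t.lt_succ_self,
      ih (fun s hs => hG s (hs.trans t.lt_succ_self)) fun s hs => hπ s (hs.trans t.lt_succ_self)]

theorem Jmf_congr {T : ℕ} {G G' : ℕ → 𝒳 → ℝ} {π π' : ℕ → 𝒳 → 𝒰 → ℝ}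
    (hG : ∀ t < T, G t = G' t) (hπ : ∀ t < T, π t = π' t) :
    Jmf T r P μ0 G π = Jmf T r P μ0 G' π' := by
  refine Finset.sum_congr rfl fun t ht => ?_
  have htT : t < T := Finset.mem_range.1 ht
  rw [stateLaw_congr (fun s hs => hG s (hs.trans htT)) fun s hs => hπ s (hs.trans htT), hG t htT,
    hπ t htT]

variable {V : Type*} [TopologicalSpace V] {G : V → ℕ → 𝒳 → ℝ}

theorem continuous_stateLaw (hP : ∀ x u, ContinuousOn (P x u) (subProb 𝒳))
    (hG : ∀ t, Continuous fun v => G v t) (hmem : ∀ v t, G v t ∈ subProb 𝒳)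
    (π : ℕ → 𝒳 → 𝒰 → ℝ) (t : ℕ) : Continuous fun v => stateLaw P μ0 (G v) π t := by
  induction t with
  | zero => exact continuous_const
  | succ t ih =>
    have hPG : ∀ x u, Continuous fun v => P x u (G v t) := fun x u =>
      (hP x u).comp_continuous (hG t) fun v => hmem v t
    exact continuous_pi fun x' => continuous_finsetSum _ fun x _ =>
      ((continuous_apply x).comp ih).mul <| continuous_finsetSum _ fun u _ =>
        continuous_const.mul ((continuous_apply x').comp (hPG x u))

theorem continuous_Jmf (hP : ∀ x u, ContinuousOn (P x u) (subProb 𝒳))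
    (hr : ∀ x u, ContinuousOn (r x u) (subProb 𝒳)) (hG : ∀ t, Continuous fun v => G v t)
    (hmem : ∀ v t, G v t ∈ subProb 𝒳) (T : ℕ) (π : ℕ → 𝒳 → 𝒰 → ℝ) :
    Continuous fun v => Jmf T r P μ0 (G v) π := by
  have hrG : ∀ x u t, Continuous fun v => r x u (G v t) := fun x u t =>
    (hr x u).comp_continuous (hG t) fun v => hmem v t
  exact continuous_finsetSum _ fun t _ => continuous_finsetSum _ fun x _ =>
    ((continuous_apply x).comp (continuous_stateLaw hP hG hmem π t)).mul <|
      continuous_finsetSum _ fun u _ => continuous_const.mul (hrG x u t)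

end StateLaw

section DynamicProgramming

variable [Fintype 𝒰]

open Classical in
/-- The Markov policy that plays the action `a t x` in state `x` at time `t`. -/
noncomputable def purePolicy (a : ℕ → 𝒳 → 𝒰) : ℕ → 𝒳 → 𝒰 → ℝ :=
  fun t x => Pi.single (a t x) 1

theorem isPolicy_purePolicy (a : ℕ → 𝒳 → 𝒰) : IsPolicy (purePolicy a) := fun t x => by
  classical
  exact single_mem_stdSimplex ℝ (a t x)

theorem sum_purePolicy_mul (a : ℕ → 𝒳 → 𝒰) (t : ℕ) (x : 𝒳) (f : 𝒰 → ℝ) :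
    ∑ u, purePolicy a t x u * f u = f (a t x) := by
  classical
  simp [purePolicy, Pi.single_apply]

variable [Fintype 𝒳] [Nonempty 𝒰] {P : 𝒳 → 𝒰 → (𝒳 → ℝ) → 𝒳 → ℝ} {G : ℕ → 𝒳 → ℝ}

/-- The optimal value with `k` steps to go from time `t` in state `x`. -/
noncomputable def optimalValue (r : 𝒳 → 𝒰 → (𝒳 → ℝ) → ℝ) (P : 𝒳 → 𝒰 → (𝒳 → ℝ) → 𝒳 → ℝ)
    (G : ℕ → 𝒳 → ℝ) (k t : ℕ) (x : 𝒳) : ℝ :=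
  maxPayoff (Qfun r P G k t x)

theorem sum_stateLaw_mul_Qfun_succ (r : 𝒳 → 𝒰 → (𝒳 → ℝ) → ℝ) (P : 𝒳 → 𝒰 → (𝒳 → ℝ) → 𝒳 → ℝ)
    (μ0 : 𝒳 → ℝ) (G : ℕ → 𝒳 → ℝ) (π : ℕ → 𝒳 → 𝒰 → ℝ) (k t : ℕ) :
    ∑ x, stateLaw P μ0 G π t x * ∑ u, π t x u * Qfun r P G (k + 1) t x u =
      (∑ x, stateLaw P μ0 G π t x * ∑ u, π t x u * r x u (G t)) +
        ∑ x', stateLaw P μ0 G π (t + 1) x' * optimalValue r P G k (t + 1) x' := by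
  have hnext : ∑ x', stateLaw P μ0 G π (t + 1) x' * optimalValue r P G k (t + 1) x' =
      ∑ x, stateLaw P μ0 G π t x * ∑ u, π t x u *
        ∑ x', P x u (G t) x' * optimalValue r P G k (t + 1) x' := by
    simp only [stateLaw, Finset.sum_mul, Finset.mul_sum, mul_assoc]
    rw [Finset.sum_comm]
    exact Finset.sum_congr rfl fun x _ => Finset.sum_comm
  rw [hnext, ← Finset.sum_add_distrib]
  refine Finset.sum_congr rfl fun x _ => ?_
  rw [← mul_add, ← Finset.sum_add_distrib]
  simp only [← mul_add]
  rfl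

/-- The expected loss of a policy at time `t`, relative to acting optimally from then on. -/
noncomputable def expectedRegret (T : ℕ) (r : 𝒳 → 𝒰 → (𝒳 → ℝ) → ℝ)
    (P : 𝒳 → 𝒰 → (𝒳 → ℝ) → 𝒳 → ℝ) (μ0 : 𝒳 → ℝ) (G : ℕ → 𝒳 → ℝ) (π : ℕ → 𝒳 → 𝒰 → ℝ) (t : ℕ) : ℝ :=
  ∑ x, stateLaw P μ0 G π t x *
    (optimalValue r P G (T - t) t x - ∑ u, π t x u * Qfun r P G (T - t) t x u)

theorem Jmf_add_sum_expectedRegret (T : ℕ) (r : 𝒳 → 𝒰 → (𝒳 → ℝ) → ℝ)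
    (P : 𝒳 → 𝒰 → (𝒳 → ℝ) → 𝒳 → ℝ) (μ0 : 𝒳 → ℝ) (G : ℕ → 𝒳 → ℝ) (π : ℕ → 𝒳 → 𝒰 → ℝ) :
    Jmf T r P μ0 G π + ∑ t ∈ Finset.range T, expectedRegret T r P μ0 G π t =
      ∑ x, μ0 x * optimalValue r P G T 0 x := by
  let E : ℕ → ℝ := fun t => ∑ x, stateLaw P μ0 G π t x * optimalValue r P G (T - t) t x
  have hstep : ∀ t ∈ Finset.range T,
      (∑ x, stateLaw P μ0 G π t x * ∑ u, π t x u * r x u (G t)) + expectedRegret T r P μ0 G π t =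
        E t - E (t + 1) := fun t ht => by
    obtain ⟨k, hk⟩ : ∃ k, T - t = k + 1 := ⟨T - t - 1, by grind⟩
    have hbellman := sum_stateLaw_mul_Qfun_succ r P μ0 G π k t
    simp only [E, expectedRegret, mul_sub, Finset.sum_sub_distrib, show T - (t + 1) = k by lia,
      hk, hbellman]
    ring
  have hend : E T = 0 := by
    simp [E, optimalValue, maxPayoff, Qfun]
  rw [Jmf, ← Finset.sum_add_distrib, Finset.sum_congr rfl hstep, Finset.sum_range_sub', hend,
    sub_zero]
  simp [E, stateLaw]

theorem exists_purePolicy_forall_Jmf_le (T : ℕ) (r : 𝒳 → 𝒰 → (𝒳 → ℝ) → ℝ) (hP : IsKernel P)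
    {μ0 : 𝒳 → ℝ} (hμ0 : μ0 ∈ simplex 𝒳) (hG : ∀ t, G t ∈ subProb 𝒳) :
    ∃ a : ℕ → 𝒳 → 𝒰, ∀ π, IsPolicy π → Jmf T r P μ0 G π ≤ Jmf T r P μ0 G (purePolicy a) := by
  choose a ha using fun t x => exists_eq_maxPayoff (Qfun r P G (T - t) t x)
  refine ⟨a, fun π hπ => ?_⟩
  have hregret : ∀ t, 0 ≤ expectedRegret T r P μ0 G π t := fun t =>
    Finset.sum_nonneg fun x _ => mul_nonneg ((stateLaw_mem_simplex hP hμ0 hG hπ t).1 x)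
      (sub_nonneg.2 (sum_mul_le_maxPayoff (hπ t x) _))
  have hgreedy : ∀ t, expectedRegret T r P μ0 G (purePolicy a) t = 0 := fun t => by
    simp [expectedRegret, sum_purePolicy_mul, ha, optimalValue]
  calc Jmf T r P μ0 G π
      ≤ Jmf T r P μ0 G π + ∑ t ∈ Finset.range T, expectedRegret T r P μ0 G π t :=
        le_add_of_nonneg_right (Finset.sum_nonneg fun t _ => hregret t)
    _ = Jmf T r P μ0 G (purePolicy a) +
          ∑ t ∈ Finset.range T, expectedRegret T r P μ0 G (purePolicy a) t := by
        rw [Jmf_add_sum_expectedRegret, Jmf_add_sum_expectedRegret]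
    _ = Jmf T r P μ0 G (purePolicy a) := by
        simp only [hgreedy, Finset.sum_const_zero, add_zero]

end DynamicProgramming

section Kuhn

variable {A : Type*} [Fintype A]

open Classical in
/-- The Bayesian update of a prior `q` by a likelihood `ℓ`. When the observation has probability
zero the prior is kept, so that the posterior is always a probability vector. -/
noncomputable def posterior (q ℓ : A → ℝ) : A → ℝ :=
  if ∑ a, q a * ℓ a = 0 then q else normalize fun a => q a * ℓ a

theorem posterior_mem_stdSimplex {q ℓ : A → ℝ} (hq : q ∈ stdSimplex ℝ A) (hℓ : ∀ a, 0 ≤ ℓ a) :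
    posterior q ℓ ∈ stdSimplex ℝ A := by
  unfold posterior
  split_ifs with h
  · exact hq
  · exact normalize_mem_stdSimplex (fun a => mul_nonneg (hq.1 a) (hℓ a)) h

theorem sum_mul_posterior {q ℓ : A → ℝ} (hq : q ∈ stdSimplex ℝ A) (hℓ : ∀ a, 0 ≤ ℓ a) (a : A) :
    (∑ b, q b * ℓ b) * posterior q ℓ a = q a * ℓ a := by
  unfold posterior
  split_ifs with h
  · rw [h, zero_mul, (Finset.sum_eq_zero_iff_of_nonneg
      fun b _ => mul_nonneg (hq.1 b) (hℓ b)).1 h a (Finset.mem_univ a)]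
  · exact mul_div_cancel₀ _ h

theorem measurable_posterior :
    Measurable fun p : (A → ℝ) × (A → ℝ) => posterior p.1 p.2 := by
  have hw : ∀ a, Measurable fun p : (A → ℝ) × (A → ℝ) => p.1 a * p.2 a := fun a => by fun_prop
  have hsum : Measurable fun p : (A → ℝ) × (A → ℝ) => ∑ a, p.1 a * p.2 a :=
    Finset.measurable_sum _ fun a _ => hw a
  exact Measurable.ite (hsum (measurableSet_singleton 0)) measurable_fst
    (measurable_pi_lambda _ fun a => (hw a).div hsum)

variable [Fintype 𝒳] [Fintype 𝒰] {P : 𝒳 → 𝒰 → (𝒳 → ℝ) → 𝒳 → ℝ} {μ0 : 𝒳 → ℝ}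
  {G : ℕ → 𝒳 → ℝ} {σ : A → ℕ → 𝒳 → 𝒰 → ℝ} {q : A → ℝ}

/-- The behavioural policy that realizes the mixture of the policies `σ a` with weights `q a`: in
state `x` at time `t` it plays `σ a` with the conditional probability that `a` was drawn given that
the state is `x`. -/
noncomputable def mixturePolicy (P : 𝒳 → 𝒰 → (𝒳 → ℝ) → 𝒳 → ℝ) (μ0 : 𝒳 → ℝ) (G : ℕ → 𝒳 → ℝ)
    (σ : A → ℕ → 𝒳 → 𝒰 → ℝ) (q : A → ℝ) : ℕ → 𝒳 → 𝒰 → ℝ :=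
  fun t x u => ∑ a, posterior q (fun b => stateLaw P μ0 G (σ b) t x) a * σ a t x u

theorem measurable_mixturePolicy {Ω : Type*} [MeasurableSpace Ω] {q : Ω → A → ℝ}
    (hq : Measurable q) {G : Ω → ℕ → 𝒳 → ℝ} {t : ℕ}
    (hm : ∀ a, Measurable fun ω => stateLaw P μ0 (G ω) (σ a) t) (x : 𝒳) (u : 𝒰) :
    Measurable fun ω => mixturePolicy P μ0 (G ω) σ (q ω) t x u := by
  have hpost : Measurable fun ω =>
      posterior (q ω) fun a => stateLaw P μ0 (G ω) (σ a) t x :=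
    measurable_posterior.comp
      (hq.prodMk (measurable_pi_lambda _ fun a => (measurable_pi_apply x).comp (hm a)))
  exact Finset.measurable_sum _ fun a _ => ((measurable_pi_apply a).comp hpost).mul_const _

variable (hP : IsKernel P) (hμ0 : μ0 ∈ simplex 𝒳) (hG : ∀ t, G t ∈ subProb 𝒳)
  (hσ : ∀ a, IsPolicy (σ a)) (hq : q ∈ stdSimplex ℝ A)

include hP hμ0 hG hσ hq

theorem isPolicy_mixturePolicy : IsPolicy (mixturePolicy P μ0 G σ q) := fun t x => by
  have hpost : posterior q (fun b => stateLaw P μ0 G (σ b) t x) ∈ stdSimplex ℝ A :=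
    posterior_mem_stdSimplex hq fun a => (stateLaw_mem_simplex hP hμ0 hG (hσ a) t).1 x
  have hmix : ∑ a, posterior q (fun b => stateLaw P μ0 G (σ b) t x) a • σ a t x ∈
      stdSimplex ℝ 𝒰 :=
    (convex_stdSimplex ℝ 𝒰).sum_mem (fun a _ => hpost.1 a) hpost.2 fun a _ => hσ a t x
  have heq : mixturePolicy P μ0 G σ q t x =
      ∑ a, posterior q (fun b => stateLaw P μ0 G (σ b) t x) a • σ a t x := by
    funext u
    simp [mixturePolicy]
  exact heq ▸ hmix

theorem sum_mul_stateLaw_mul_mixturePolicy (t : ℕ) (x : 𝒳) (c : 𝒰 → ℝ) :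
    (∑ a, q a * stateLaw P μ0 G (σ a) t x) * ∑ u, mixturePolicy P μ0 G σ q t x u * c u =
      ∑ a, q a * (stateLaw P μ0 G (σ a) t x * ∑ u, σ a t x u * c u) := by
  have hbayes := sum_mul_posterior (ℓ := fun b => stateLaw P μ0 G (σ b) t x) hq
    fun a => (stateLaw_mem_simplex hP hμ0 hG (hσ a) t).1 x
  have hswap : ∑ u, mixturePolicy P μ0 G σ q t x u * c u =
      ∑ a, posterior q (fun b => stateLaw P μ0 G (σ b) t x) a * ∑ u, σ a t x u * c u := by
    simp only [mixturePolicy, Finset.sum_mul, Finset.mul_sum, mul_assoc]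
    exact Finset.sum_comm
  rw [hswap, Finset.mul_sum]
  exact Finset.sum_congr rfl fun a _ => by rw [← mul_assoc, hbayes, mul_assoc]

theorem stateLaw_mixturePolicy (t : ℕ) :
    stateLaw P μ0 G (mixturePolicy P μ0 G σ q) t =
      fun x => ∑ a, q a * stateLaw P μ0 G (σ a) t x := by
  induction t with
  | zero =>
    funext x
    simp only [stateLaw, ← Finset.sum_mul, hq.2, one_mul]
  | succ t ih =>
    funext x'
    simp only [stateLaw, ih, sum_mul_stateLaw_mul_mixturePolicy hP hμ0 hG hσ hq, Finset.mul_sum]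
    exact Finset.sum_comm

theorem Jmf_mixturePolicy (T : ℕ) (r : 𝒳 → 𝒰 → (𝒳 → ℝ) → ℝ) :
    Jmf T r P μ0 G (mixturePolicy P μ0 G σ q) = ∑ a, q a * Jmf T r P μ0 G (σ a) := by
  simp only [Jmf, stateLaw_mixturePolicy hP hμ0 hG hσ hq,
    sum_mul_stateLaw_mul_mixturePolicy hP hμ0 hG hσ hq, Finset.mul_sum (s := Finset.range T),
    Finset.mul_sum (s := (Finset.univ : Finset 𝒳))]
  rw [Finset.sum_comm (s := (Finset.univ : Finset A))]
  exact Finset.sum_congr rfl fun t _ => Finset.sum_comm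

end Kuhn

section MeanField

variable [Fintype 𝒳] {W : ℝ → ℝ → ℝ} {μ0 : 𝒳 → ℝ}

theorem measurable_nbhd (hW : Measurable (Function.uncurry W)) {ν : ℝ → 𝒳 → ℝ}
    (hν : Measurable ν) : Measurable (nbhd W ν) :=
  measurable_kernelIntegral hW hν

theorem nbhd_mem_subProb (hW : Measurable (Function.uncurry W))
    (hW01 : ∀ a b, W a b ∈ Set.Icc (0 : ℝ) 1) {ν : ℝ → 𝒳 → ℝ} (hν : Measurable ν)
    (hmem : ∀ β, ν β ∈ simplex 𝒳) (α : ℝ) : nbhd W ν α ∈ subProb 𝒳 := by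
  have hle : ∀ β x, W α β * ν β x ≤ ν β x := fun β x =>
    mul_le_of_le_one_left ((hmem β).1 x) (hW01 α β).2
  have hnonneg : ∀ β x, 0 ≤ W α β * ν β x := fun β x =>
    mul_nonneg (hW01 α β).1 ((hmem β).1 x)
  have hν1 : ∀ β x, ν β x ≤ 1 := fun β x => (mem_Icc_of_mem_stdSimplex (hmem β) x).2
  have hint : ∀ x, Integrable (fun β => W α β * ν β x) (volume.restrict (Set.Ioc 0 1)) := fun x =>
    .of_bound (hW.of_uncurry_left.mul ((measurable_pi_apply x).comp hν)).aestronglyMeasurable 1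
      (Eventually.of_forall fun β => by
        rw [Real.norm_of_nonneg (hnonneg β x)]
        exact (hle β x).trans (hν1 β x))
  refine ⟨fun x => integral_nonneg fun β => hnonneg β x, ?_⟩
  calc ∑ x, nbhd W ν α x = ∫ β in Set.Ioc (0 : ℝ) 1, ∑ x, W α β * ν β x :=
        (integral_finsetSum _ fun x _ => hint x).symm
    _ ≤ ∫ _ in Set.Ioc (0 : ℝ) 1, (1 : ℝ) :=
        integral_mono (integrable_finsetSum _ fun x _ => hint x) (integrable_const 1) fun β =>
          (Finset.sum_le_sum fun x _ => hle β x).trans (hmem β).2.le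
    _ = 1 := by simp

variable [Fintype 𝒰] {P : 𝒳 → 𝒰 → (𝒳 → ℝ) → 𝒳 → ℝ} {πe : ℝ → ℕ → 𝒳 → 𝒰 → ℝ}

/-- The mean field ensemble `Ψ(𝛑)` generated by a policy ensemble. -/
noncomputable def meanField (W : ℝ → ℝ → ℝ) (P : 𝒳 → 𝒰 → (𝒳 → ℝ) → 𝒳 → ℝ) (μ0 : 𝒳 → ℝ)
    (πe : ℝ → ℕ → 𝒳 → 𝒰 → ℝ) : ℕ → ℝ → 𝒳 → ℝ
  | 0 => fun _ => μ0
  | t + 1 => fun α x' => ∑ x, meanField W P μ0 πe t α x *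
      ∑ u, πe α t x u * P x u (nbhd W (meanField W P μ0 πe t) α) x'

theorem meanField_eq_stateLaw_of_consistent {T : ℕ} {H : ℝ → ℕ → 𝒳 → ℝ}
    (hH : ∀ t < T, ∀ α, H α t = nbhd W (fun β => stateLaw P μ0 (H β) (πe β) t) α) {t : ℕ}
    (ht : t ≤ T) : meanField W P μ0 πe t = fun α => stateLaw P μ0 (H α) (πe α) t := by
  induction t with
  | zero => rfl
  | succ t ih => simp only [meanField, stateLaw, ih (Nat.le_of_succ_le ht), ← hH t ht]

theorem measurable_meanField_and_mem_simplex (hW : Measurable (Function.uncurry W))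
    (hW01 : ∀ a b, W a b ∈ Set.Icc (0 : ℝ) 1) (hP : IsKernel P)
    (hPc : ∀ x u, ContinuousOn (P x u) (subProb 𝒳)) (hμ0 : μ0 ∈ simplex 𝒳)
    (hπ : ∀ t x u, Measurable fun α => πe α t x u) (hpol : ∀ α, IsPolicy (πe α)) (t : ℕ) :
    Measurable (meanField W P μ0 πe t) ∧ ∀ α, meanField W P μ0 πe t α ∈ simplex 𝒳 := by
  induction t with
  | zero => exact ⟨measurable_const, fun _ => hμ0⟩
  | succ t ih =>
    obtain ⟨hmeas, hmem⟩ := ih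
    have hG : ∀ α, nbhd W (meanField W P μ0 πe t) α ∈ subProb 𝒳 :=
      nbhd_mem_subProb hW hW01 hmeas hmem
    have hPG : ∀ x u, Measurable fun α => P x u (nbhd W (meanField W P μ0 πe t) α) := fun x u =>
      measurable_comp_of_continuousOn_subProb (hPc x u) (measurable_nbhd hW hmeas) hG
    exact ⟨measurable_pi_lambda _ fun x' => Finset.measurable_sum _ fun x _ =>
        ((measurable_pi_apply x).comp hmeas).mul <| Finset.measurable_sum _ fun u _ =>
          (hπ t x u).mul ((measurable_pi_apply x').comp (hPG x u)),
      fun α => hP.sum_mul_sum_mul_mem_simplex (hG α) (hmem α) (hpol α t)⟩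

theorem isMeanFieldOf_meanField (hW : Measurable (Function.uncurry W))
    (hW01 : ∀ a b, W a b ∈ Set.Icc (0 : ℝ) 1) (hP : IsKernel P)
    (hPc : ∀ x u, ContinuousOn (P x u) (subProb 𝒳)) (hμ0 : μ0 ∈ simplex 𝒳)
    (hπ : ∀ t x u, Measurable fun α => πe α t x u) (hpol : ∀ α, IsPolicy (πe α)) :
    IsMeanFieldOf W P μ0 πe (meanField W P μ0 πe) :=
  ⟨fun t x => (measurable_pi_apply x).comp
    (measurable_meanField_and_mem_simplex hW hW01 hP hPc hμ0 hπ hpol t).1,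
    fun _ _ => rfl, fun _ _ _ _ => rfl⟩

end MeanField

theorem isGMFE_meanField_of_consistent [Fintype 𝒳] [Fintype 𝒰] {T : ℕ} {μ0 : 𝒳 → ℝ}
    (hμ0 : μ0 ∈ simplex 𝒳) {P : 𝒳 → 𝒰 → (𝒳 → ℝ) → 𝒳 → ℝ} (hP : IsKernel P)
    (hPc : ∀ x u, ContinuousOn (P x u) (subProb 𝒳)) {r : 𝒳 → 𝒰 → (𝒳 → ℝ) → ℝ}
    {W : ℝ → ℝ → ℝ} (hW : Measurable (Function.uncurry W))
    (hW01 : ∀ a b, W a b ∈ Set.Icc (0 : ℝ) 1) {πe : ℝ → ℕ → 𝒳 → 𝒰 → ℝ}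
    (hπ : ∀ t x u, Measurable fun α => πe α t x u) (hpol : ∀ α, IsPolicy (πe α))
    {H : ℝ → ℕ → 𝒳 → ℝ}
    (hH : ∀ t < T, ∀ α, H α t = nbhd W (fun β => stateLaw P μ0 (H β) (πe β) t) α)
    (hopt : ∀ α π', IsPolicy π' → Jmf T r P μ0 (H α) π' ≤ Jmf T r P μ0 (H α) (πe α)) :
    IsGMFE T W P r μ0 πe (meanField W P μ0 πe) := by
  have hJ : ∀ α π, Jmf T r P μ0 (fun t => nbhd W (meanField W P μ0 πe t) α) π =
      Jmf T r P μ0 (H α) π := fun α π => Jmf_congr (fun t ht => by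
    rw [meanField_eq_stateLaw_of_consistent hH ht.le, hH t ht α]) fun _ _ => rfl
  refine ⟨hπ, fun α _ => hpol α, isMeanFieldOf_meanField hW hW01 hP hPc hμ0 hπ hpol,
    fun α _ π' hπ' => ?_⟩
  rw [hJ, hJ]
  exact hopt α π' hπ'

section PlanGame

/-- The policy that follows a deterministic plan over the horizon `T`, repeated periodically. -/
noncomputable def planPolicy {T : ℕ} (a : Fin (T + 1) → 𝒳 → 𝒰) : ℕ → 𝒳 → 𝒰 → ℝ :=
  purePolicy fun t => a (Fin.ofNat (T + 1) t)

theorem isPolicy_planPolicy [Fintype 𝒰] {T : ℕ} (a : Fin (T + 1) → 𝒳 → 𝒰) :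
    IsPolicy (planPolicy a) :=
  isPolicy_purePolicy _

variable [Fintype 𝒳]

/-- The path of neighborhood mean fields encoded by a vector `v`; projecting onto `subProb 𝒳` makes
every `v` admissible. Times beyond the horizon `T` are reduced modulo `T + 1`. -/
noncomputable def fieldPath (T : ℕ) (v : Fin (T + 1) × 𝒳 → ℝ) : ℕ → 𝒳 → ℝ :=
  fun t => subProbRetract fun x => v (Fin.ofNat (T + 1) t, x)

theorem fieldPath_mem (T : ℕ) (v : Fin (T + 1) × 𝒳 → ℝ) (t : ℕ) : fieldPath T v t ∈ subProb 𝒳 :=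
  subProbRetract_mem _

theorem continuous_fieldPath (T t : ℕ) :
    Continuous fun v : Fin (T + 1) × 𝒳 → ℝ => fieldPath T v t :=
  continuous_subProbRetract.comp (by fun_prop)

theorem fieldPath_eq {T t : ℕ} {v : Fin (T + 1) × 𝒳 → ℝ} {ν : 𝒳 → ℝ}
    (hν : ν ∈ subProb 𝒳) (hv : ∀ x, v (Fin.ofNat (T + 1) t, x) = ν x) : fieldPath T v t = ν := by
  rw [fieldPath, funext hv, subProbRetract_eq_self hν]

variable [Fintype 𝒰] {P : 𝒳 → 𝒰 → (𝒳 → ℝ) → 𝒳 → ℝ} {r : 𝒳 → 𝒰 → (𝒳 → ℝ) → ℝ} {μ0 : 𝒳 → ℝ}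

theorem exists_planPolicy_forall_Jmf_le [Nonempty 𝒰] (T : ℕ) (r : 𝒳 → 𝒰 → (𝒳 → ℝ) → ℝ)
    (hP : IsKernel P) (hμ0 : μ0 ∈ simplex 𝒳) {G : ℕ → 𝒳 → ℝ} (hG : ∀ t, G t ∈ subProb 𝒳) :
    ∃ a : Fin (T + 1) → 𝒳 → 𝒰, ∀ π, IsPolicy π →
      Jmf T r P μ0 G π ≤ Jmf T r P μ0 G (planPolicy a) := by
  obtain ⟨a, ha⟩ := exists_purePolicy_forall_Jmf_le T r hP hμ0 hG
  refine ⟨fun i => a i, fun π hπ => (ha π hπ).trans_eq (Jmf_congr (fun _ _ => rfl) fun t ht => ?_)⟩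
  funext x
  simp only [planPolicy, purePolicy, Fin.val_ofNat, Nat.mod_eq_of_lt (ht.trans T.lt_succ_self)]

theorem measurable_stateLaw_fieldPath {T : ℕ} (hPc : ∀ x u, ContinuousOn (P x u) (subProb 𝒳))
    {y : ℝ → Fin (T + 1) × 𝒳 → ℝ} (hy : Measurable y) (π : ℕ → 𝒳 → 𝒰 → ℝ) (t : ℕ) :
    Measurable fun β => stateLaw P μ0 (fieldPath T (y β)) π t :=
  (continuous_stateLaw hPc (continuous_fieldPath T) (fieldPath_mem T) π t).measurable.comp hy

/-- The laws of the state at the times `0, …, T` under a plan, facing the mean fields encoded by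
`v`: the contribution of an agent to the fields of the others in the static game over plans. -/
noncomputable def planLaw {T : ℕ} (P : 𝒳 → 𝒰 → (𝒳 → ℝ) → 𝒳 → ℝ) (μ0 : 𝒳 → ℝ)
    (v : Fin (T + 1) × 𝒳 → ℝ) (a : Fin (T + 1) → 𝒳 → 𝒰) : Fin (T + 1) × 𝒳 → ℝ :=
  fun i => stateLaw P μ0 (fieldPath T v) (planPolicy a) i.1 i.2

theorem continuous_planLaw (T : ℕ) (μ0 : 𝒳 → ℝ) (hPc : ∀ x u, ContinuousOn (P x u) (subProb 𝒳)) :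
    Continuous (planLaw P μ0 : (Fin (T + 1) × 𝒳 → ℝ) → _) :=
  continuous_pi fun a => continuous_pi fun i => (continuous_apply i.2).comp <|
    continuous_stateLaw hPc (continuous_fieldPath T) (fieldPath_mem T) (planPolicy a) i.1

theorem norm_planLaw_le_one {T : ℕ} (hP : IsKernel P) (hμ0 : μ0 ∈ simplex 𝒳)
    (v : Fin (T + 1) × 𝒳 → ℝ) (a : Fin (T + 1) → 𝒳 → 𝒰) : ‖planLaw P μ0 v a‖ ≤ 1 :=
  (pi_norm_le_iff_of_nonneg zero_le_one).2 fun i => (norm_le_pi_norm _ i.2).trans <|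
    norm_le_one_of_mem_stdSimplex <|
      stateLaw_mem_simplex hP hμ0 (fieldPath_mem T v) (isPolicy_planPolicy a) i.1

/-- The payoff of a plan against the mean fields encoded by `v` in the static game over plans. -/
noncomputable def planValue {T : ℕ} (P : 𝒳 → 𝒰 → (𝒳 → ℝ) → 𝒳 → ℝ)
    (r : 𝒳 → 𝒰 → (𝒳 → ℝ) → ℝ) (μ0 : 𝒳 → ℝ) (v : Fin (T + 1) × 𝒳 → ℝ)
    (a : Fin (T + 1) → 𝒳 → 𝒰) : ℝ :=
  Jmf T r P μ0 (fieldPath T v) (planPolicy a)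

theorem continuous_planValue (T : ℕ) (μ0 : 𝒳 → ℝ) (hPc : ∀ x u, ContinuousOn (P x u) (subProb 𝒳))
    (hrc : ∀ x u, ContinuousOn (r x u) (subProb 𝒳)) :
    Continuous (planValue P r μ0 : (Fin (T + 1) × 𝒳 → ℝ) → _) :=
  continuous_pi fun a =>
    continuous_Jmf hPc hrc (continuous_fieldPath T) (fieldPath_mem T) T (planPolicy a)

variable [DecidableEq 𝒳] {T : ℕ}

/-- The mixture of all plans with weights `q`, facing the mean fields encoded by `v`. -/
noncomputable def planMixture (P : 𝒳 → 𝒰 → (𝒳 → ℝ) → 𝒳 → ℝ) (μ0 : 𝒳 → ℝ)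
    (v : Fin (T + 1) × 𝒳 → ℝ) (q : (Fin (T + 1) → 𝒳 → 𝒰) → ℝ) : ℕ → 𝒳 → 𝒰 → ℝ :=
  mixturePolicy P μ0 (fieldPath T v) planPolicy q

variable {v : Fin (T + 1) × 𝒳 → ℝ} {q : (Fin (T + 1) → 𝒳 → 𝒰) → ℝ}

theorem isPolicy_planMixture (hP : IsKernel P) (hμ0 : μ0 ∈ simplex 𝒳)
    (hq : q ∈ stdSimplex ℝ (Fin (T + 1) → 𝒳 → 𝒰)) : IsPolicy (planMixture P μ0 v q) :=
  isPolicy_mixturePolicy hP hμ0 (fieldPath_mem T v) isPolicy_planPolicy hq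

theorem Jmf_le_Jmf_planMixture [Nonempty 𝒰] (hP : IsKernel P) (hμ0 : μ0 ∈ simplex 𝒳)
    (hq : IsNearOptimal 0 (planValue P r μ0 v) q) {π : ℕ → 𝒳 → 𝒰 → ℝ} (hπ : IsPolicy π) :
    Jmf T r P μ0 (fieldPath T v) π ≤ Jmf T r P μ0 (fieldPath T v) (planMixture P μ0 v q) := by
  obtain ⟨a, ha⟩ := exists_planPolicy_forall_Jmf_le T r hP hμ0 (fieldPath_mem T v)
  calc Jmf T r P μ0 (fieldPath T v) π ≤ planValue P r μ0 v a := ha π hπ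
    _ ≤ maxPayoff (planValue P r μ0 v) := le_maxPayoff _ a
    _ ≤ ∑ b, q b * planValue P r μ0 v b := by simpa using hq.2
    _ = Jmf T r P μ0 (fieldPath T v) (planMixture P μ0 v q) :=
      (Jmf_mixturePolicy hP hμ0 (fieldPath_mem T v) isPolicy_planPolicy hq.1 T r).symm

variable {qe : ℝ → (Fin (T + 1) → 𝒳 → 𝒰) → ℝ} {y : ℝ → Fin (T + 1) × 𝒳 → ℝ}

theorem measurable_planMixture (hPc : ∀ x u, ContinuousOn (P x u) (subProb 𝒳))
    (hq : Measurable qe) (hy : Measurable y) (t : ℕ) (x : 𝒳) (u : 𝒰) :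
    Measurable fun α => planMixture P μ0 (y α) (qe α) t x u :=
  measurable_mixturePolicy hq (fun a => measurable_stateLaw_fieldPath hPc hy (planPolicy a) t) x u

theorem IsGraphonGameEquilibrium.fieldPath_eq_nbhd [Nonempty 𝒰] (hP : IsKernel P)
    (hμ0 : μ0 ∈ simplex 𝒳) (hPc : ∀ x u, ContinuousOn (P x u) (subProb 𝒳)) {W : ℝ → ℝ → ℝ}
    (hW : Measurable (Function.uncurry W)) (hW01 : ∀ a b, W a b ∈ Set.Icc (0 : ℝ) 1) {ε : ℝ}
    (h : IsGraphonGameEquilibrium (volume.restrict (Set.Ioc 0 1)) W (planLaw P μ0)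
      (planValue P r μ0) ε qe y) {t : ℕ} (ht : t < T) (α : ℝ) :
    fieldPath T (y α) t =
      nbhd W (fun β => stateLaw P μ0 (fieldPath T (y β)) (planMixture P μ0 (y β) (qe β)) t) α := by
  have hq : ∀ β, qe β ∈ stdSimplex ℝ _ := fun β => (h.isNearOptimal β).1
  have hlaw : ∀ β, stateLaw P μ0 (fieldPath T (y β)) (planMixture P μ0 (y β) (qe β)) t =
      fun x => ∑ a, qe β a * stateLaw P μ0 (fieldPath T (y β)) (planPolicy a) t x := fun β =>
    stateLaw_mixturePolicy hP hμ0 (fieldPath_mem T _) isPolicy_planPolicy (hq β) t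
  have hmeas : Measurable fun β =>
      stateLaw P μ0 (fieldPath T (y β)) (planMixture P μ0 (y β) (qe β)) t := by
    simp only [hlaw]
    exact measurable_pi_lambda _ fun x => Finset.measurable_sum _ fun a _ =>
      ((measurable_pi_apply a).comp h.measurable_action).mul ((measurable_pi_apply x).comp
        (measurable_stateLaw_fieldPath hPc h.measurable_field (planPolicy a) t))
  refine fieldPath_eq (nbhd_mem_subProb hW hW01 hmeas (fun β => stateLaw_mem_simplex hP hμ0
    (fieldPath_mem T _) (isPolicy_planMixture hP hμ0 (hq β)) t) α) fun x => ?_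
  rw [congrFun₂ h.field_eq α]
  simp only [kernelIntegral, nbhd, hlaw, Finset.sum_apply, Pi.smul_apply, smul_eq_mul, planLaw,
    Fin.val_ofNat, Nat.mod_eq_of_lt (ht.trans T.lt_succ_self)]

end PlanGame

theorem gmfe_exists_general [Fintype 𝒳] [Fintype 𝒰] [Nonempty 𝒰] (T : ℕ) (μ0 : 𝒳 → ℝ)
    (hμ0 : μ0 ∈ simplex 𝒳) (P : 𝒳 → 𝒰 → (𝒳 → ℝ) → 𝒳 → ℝ) (hP : IsKernel P)
    (hPc : ∀ x u, ContinuousOn (P x u) (subProb 𝒳)) (r : 𝒳 → 𝒰 → (𝒳 → ℝ) → ℝ)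
    (hrc : ∀ x u, ContinuousOn (r x u) (subProb 𝒳)) (W : ℝ → ℝ → ℝ)
    (hW : Measurable (Function.uncurry W)) (hW01 : ∀ a b, W a b ∈ Set.Icc (0 : ℝ) 1) :
    ∃ (πe : ℝ → ℕ → 𝒳 → 𝒰 → ℝ) (μ : ℕ → ℝ → 𝒳 → ℝ), IsGMFE T W P r μ0 πe μ := by
  classical
  have hW1 : ∀ α β, |W α β| ≤ 1 := fun α β => abs_le.2 ⟨by linarith [(hW01 α β).1], (hW01 α β).2⟩
  obtain ⟨q, y, h⟩ := exists_isGraphonGameEquilibrium (ρ := volume.restrict (Set.Ioc (0 : ℝ) 1))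
    hW hW1 (continuous_planLaw T μ0 hPc) (norm_planLaw_le_one hP hμ0)
    (continuous_planValue T μ0 hPc hrc)
  exact ⟨fun α => planMixture P μ0 (y α) (q α), _,
    isGMFE_meanField_of_consistent hμ0 hP hPc hW hW01
      (measurable_planMixture hPc h.measurable_action h.measurable_field)
      (fun α => isPolicy_planMixture hP hμ0 (h.isNearOptimal α).1)
      (fun _ ht => h.fieldPath_eq_nbhd hP hμ0 hPc hW hW01 ht)
      fun α _ => Jmf_le_Jmf_planMixture hP hμ0 (h.isNearOptimal α)⟩

/-- under Assumption (Lip) (r, P Lipschitz w.r.t. the L¹ norm on ℬ₁(𝒳) and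
W Lipschitz), there exists a Graphon Mean Field Equilibrium: a measurable policy ensemble
𝛑 and measurable mean field ensemble 𝛍 with 𝛍 = Ψ(𝛑) and, for every α ∈ [0,1], π^α
maximizing π ↦ J^𝛍_α(π) over all Markov policies. -/
theorem gmfe_exists {𝒳 𝒰 : Type*} [Fintype 𝒳] [Nonempty 𝒳] [Fintype 𝒰] [Nonempty 𝒰]
    (T : ℕ) (μ0 : 𝒳 → ℝ) (hμ0 : μ0 ∈ simplex 𝒳)
    (P : 𝒳 → 𝒰 → (𝒳 → ℝ) → 𝒳 → ℝ) (hP : IsKernel P)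
    (r : 𝒳 → 𝒰 → (𝒳 → ℝ) → ℝ)
    (W : ℝ → ℝ → ℝ) (hW : IsGraphon W)
    (Lr LP LW : ℝ)
    (hrLip : RewardLipschitz r Lr) (hPLip : KernelLipschitz P LP)
    (hWLip : GraphonLipschitz W LW) :
    ∃ (πe : ℝ → ℕ → 𝒳 → 𝒰 → ℝ) (μ : ℕ → ℝ → 𝒳 → ℝ), IsGMFE T W P r μ0 πe μ :=
  gmfe_exists_general T μ0 hμ0 P hP hPLip.continuousOn r hrLip.continuousOn W hW.1 hW.2.2

end GMFG
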